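/- (Morris-type recurrence for B_n.) Let n ≥ 2 and let ν = (ν_n,…,ν_1), μ = (μ_n,…,μ_1) ∈ ℤ^n with ν_n ≥ … ≥ ν_1 ≥ 0 and μ_n ≥ … ≥ μ_1 ≥ 0. For k ∈ {1,…,n} set R_k = ν_k + k − μ_n − n and γ_k = (ν_n + 1, ν_{n−1} + 1, …, ν_{k+1} + 1, ν_{k−1}, …, ν_1) ∈ ℤ^{n−1} (a dominant weight of type B_{n−1}), and set μ' = (μ_{n−1},…,μ_1). Then K^{B_n}_{ν,μ}(q) = Σ_{k ∈ {1,…,n}, R_k ≥ 0} (−1)^{n−k} · q^{R_k} · Σ_{(r,m) ∈ ℕ², r + 2m = R_k} Σ_λ b^λ_{γ_k,r} · K^{B_{n−1}}_{λ,μ'}(q), where the innermost sum is over all dominant weights λ of type B_{n−1} with integer coordinates (only finitely many terms are nonzero). -/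

import Mathlib

open scoped BigOperators

noncomputable section

/-- The `q`-analogue of Kostant's partition function attached to the finite set `R`
of positive roots: the coefficient of `q^k` is the number of families
`(m_α)_{α ∈ R}` of nonnegative integers with `∑ m_α = k` and `∑ m_α • α = β`. -/
def kostantQ {n : ℕ} (R : Finset (Fin n → ℚ)) (β : Fin n → ℚ) : PowerSeries ℤ :=
  PowerSeries.mk fun k =>
    (Nat.card {m : {α // α ∈ R} → ℕ //
      (∑ α, m α) = k ∧ (∑ α, (m α : ℚ) • (α : Fin n → ℚ)) = β} : ℤ)

/-- Positive roots of type `D_n` : `e_i - e_j` and `e_i + e_j` for `j < i`. -/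
def rootsD (n : ℕ) : Finset (Fin n → ℚ) :=
  ((Finset.univ : Finset (Fin n × Fin n)).filter fun p => p.2 < p.1).image
      (fun p => Pi.single p.1 (1 : ℚ) - Pi.single p.2 1) ∪
  ((Finset.univ : Finset (Fin n × Fin n)).filter fun p => p.2 < p.1).image
      (fun p => Pi.single p.1 (1 : ℚ) + Pi.single p.2 1)

/-- Positive roots of type `B_n`. -/
def rootsB (n : ℕ) : Finset (Fin n → ℚ) :=
  rootsD n ∪ (Finset.univ : Finset (Fin n)).image fun i => Pi.single i (1 : ℚ)

/-- Positive roots of type `C_n`. -/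
def rootsC (n : ℕ) : Finset (Fin n → ℚ) :=
  rootsD n ∪ (Finset.univ : Finset (Fin n)).image fun i => Pi.single i (2 : ℚ)

/-- Positive roots of type `A_{n-1}` : `e_i - e_j` for `j < i`. -/
def rootsA (n : ℕ) : Finset (Fin n → ℚ) :=
  ((Finset.univ : Finset (Fin n × Fin n)).filter fun p => p.2 < p.1).image
      fun p => Pi.single p.1 (1 : ℚ) - Pi.single p.2 1

/-- `ρ` of type `B_n` : `e_i`-coordinate `i - 1/2` (`0`-based index `i ↦ i + 1/2`). -/
def rhoB (n : ℕ) : Fin n → ℚ := fun i => ((i : ℕ) : ℚ) + 1/2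

/-- `ρ` of type `C_n` : `e_i`-coordinate `i`. -/
def rhoC (n : ℕ) : Fin n → ℚ := fun i => ((i : ℕ) : ℚ) + 1

/-- `ρ` of type `D_n` : `e_i`-coordinate `i - 1`. -/
def rhoD (n : ℕ) : Fin n → ℚ := fun i => ((i : ℕ) : ℚ)

/-- `ρ` of type `A_{n-1}` : `e_i`-coordinate `i - 1`. -/
def rhoA (n : ℕ) : Fin n → ℚ := fun i => ((i : ℕ) : ℚ)

/-- The signed permutation `(σ, ε)` acting on a weight: it maps `e_j` to `± e_{σ j}`. -/
def wAct {n : ℕ} (σ : Equiv.Perm (Fin n)) (ε : Fin n → Bool) (β : Fin n → ℚ) :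
    Fin n → ℚ := fun i => (if ε i then -1 else 1) * β (σ⁻¹ i)

/-- The determinant (sign) of the signed permutation `(σ, ε)`. -/
def wDet {n : ℕ} (σ : Equiv.Perm (Fin n)) (ε : Fin n → Bool) : ℤ :=
  (Equiv.Perm.sign σ : ℤ) * ∏ i, (if ε i then (-1 : ℤ) else 1)

/-- Kostka-Foulkes polynomial of type `B_n`, as a power series in `q`. -/
def KB (n : ℕ) (lam mu : Fin n → ℚ) : PowerSeries ℤ :=
  ∑ σ : Equiv.Perm (Fin n), ∑ ε : Fin n → Bool,
    wDet σ ε • kostantQ (rootsB n) (wAct σ ε (lam + rhoB n) - (mu + rhoB n))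

/-- Kostka-Foulkes polynomial of type `C_n`, as a power series in `q`. -/
def KC (n : ℕ) (lam mu : Fin n → ℚ) : PowerSeries ℤ :=
  ∑ σ : Equiv.Perm (Fin n), ∑ ε : Fin n → Bool,
    wDet σ ε • kostantQ (rootsC n) (wAct σ ε (lam + rhoC n) - (mu + rhoC n))

/-- Kostka-Foulkes polynomial of type `D_n`, as a power series in `q` (the Weyl group
consists of the signed permutations with an even number of sign changes). -/
def KD (n : ℕ) (lam mu : Fin n → ℚ) : PowerSeries ℤ :=
  ∑ σ : Equiv.Perm (Fin n), ∑ ε : Fin n → Bool,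
    if (∏ i, (if ε i then (-1 : ℤ) else 1)) = 1 then
      wDet σ ε • kostantQ (rootsD n) (wAct σ ε (lam + rhoD n) - (mu + rhoD n))
    else 0

/-- Kostka-Foulkes polynomial of type `A_{n-1}`, as a power series in `q`. -/
def KA (n : ℕ) (lam mu : Fin n → ℚ) : PowerSeries ℤ :=
  ∑ σ : Equiv.Perm (Fin n),
    (Equiv.Perm.sign σ : ℤ) •
      kostantQ (rootsA n) ((fun i => (lam + rhoA n) (σ⁻¹ i)) - (mu + rhoA n))

/-- Dominant weight of type `B_n` : `λ_n ≥ ⋯ ≥ λ_1 ≥ 0`, all coordinates in `ℤ`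
or all in `ℤ + 1/2`. -/
def DominantB {n : ℕ} (lam : Fin n → ℚ) : Prop :=
  Monotone lam ∧ (∀ i, 0 ≤ lam i) ∧
    ((∀ i, ∃ z : ℤ, lam i = z) ∨ (∀ i, ∃ z : ℤ, lam i = z + 1/2))

/-- Dominant weight of type `C_n` : `λ_n ≥ ⋯ ≥ λ_1 ≥ 0`, integer coordinates. -/
def DominantC {n : ℕ} (lam : Fin n → ℚ) : Prop :=
  Monotone lam ∧ (∀ i, 0 ≤ lam i) ∧ ∀ i, ∃ z : ℤ, lam i = z

/-- Dominant weight of type `D_n` : `λ_n ≥ ⋯ ≥ λ_2 ≥ |λ_1|`, all coordinates in `ℤ`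
or all in `ℤ + 1/2`. -/
def DominantD {n : ℕ} (lam : Fin n → ℚ) : Prop :=
  (∀ i j : Fin n, i ≤ j → 0 < (i : ℕ) → lam i ≤ lam j) ∧
  (∀ h : 0 < n, ∀ j : Fin n, 0 < (j : ℕ) → |lam ⟨0, h⟩| ≤ lam j) ∧
  ((∀ i, ∃ z : ℤ, lam i = z) ∨ (∀ i, ∃ z : ℤ, lam i = z + 1/2))

/-- Restriction of a weight of rank `n` to the first `n - 1` coordinates
(i.e. forgetting the `e_n`-coordinate). -/
def restrict1 {n : ℕ} (lam : Fin n → ℚ) : Fin (n - 1) → ℚ :=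
  fun i => lam ⟨(i : ℕ), by have := i.2; omega⟩

/-- Pieri number `b^λ_{γ,r}` of type `B_n`. -/
def bPieri {m : ℕ} (γ lam : Fin m → ℚ) (r : ℕ) : ℕ :=
  Nat.card {t : (Fin m → ℕ) × (Fin m → ℕ) × Bool //
    ((cond t.2.2 1 0) + ∑ i, (t.1 i + t.2.1 i)) = r ∧
    (∀ i, ((t.2.1 i : ℚ) - (t.1 i : ℚ)) = lam i - γ i) ∧
    (∀ i : Fin m, ∀ h : (i : ℕ) + 1 < m,
      lam i ≤ lam ⟨(i : ℕ) + 1, h⟩ - (t.2.1 ⟨(i : ℕ) + 1, h⟩ : ℚ)) ∧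
    (∀ i : Fin m, ∀ h : (i : ℕ) + 1 < m,
      lam i + (t.1 i : ℚ) - (t.2.1 i : ℚ) ≤
        lam ⟨(i : ℕ) + 1, h⟩ - (t.2.1 ⟨(i : ℕ) + 1, h⟩ : ℚ)) ∧
    (∀ h : 0 < m,
      if t.2.2 then (0 : ℚ) < lam ⟨0, h⟩ - (t.2.1 ⟨0, h⟩ : ℚ)
      else (0 : ℚ) ≤ lam ⟨0, h⟩ - (t.2.1 ⟨0, h⟩ : ℚ))}

/-- Pieri number `c^λ_{γ,r}` of type `C_n`. -/
def cPieri {m : ℕ} (γ lam : Fin m → ℚ) (r : ℕ) : ℕ :=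
  Nat.card {t : (Fin m → ℕ) × (Fin m → ℕ) //
    (∑ i, (t.1 i + t.2 i)) = r ∧
    (∀ i, ((t.2 i : ℚ) - (t.1 i : ℚ)) = lam i - γ i) ∧
    (∀ i : Fin m, ∀ h : (i : ℕ) + 1 < m,
      lam i ≤ lam ⟨(i : ℕ) + 1, h⟩ - (t.2 ⟨(i : ℕ) + 1, h⟩ : ℚ)) ∧
    (∀ i : Fin m, ∀ h : (i : ℕ) + 1 < m,
      lam i + (t.1 i : ℚ) - (t.2 i : ℚ) ≤
        lam ⟨(i : ℕ) + 1, h⟩ - (t.2 ⟨(i : ℕ) + 1, h⟩ : ℚ)) ∧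
    (∀ h : 0 < m, (0 : ℚ) ≤ lam ⟨0, h⟩ - (t.2 ⟨0, h⟩ : ℚ))}

/-- Pieri number `d^λ_{γ,r}` of type `D_n`. -/
def dPieri {m : ℕ} (γ lam : Fin m → ℚ) (r : ℕ) : ℕ :=
  Nat.card {t : (Fin m → ℕ) × (Fin m → ℕ) //
    (∀ h : 0 < m, min (t.1 ⟨0, h⟩) (t.2 ⟨0, h⟩) = 0) ∧
    (∑ i, (t.1 i + t.2 i)) = r ∧
    (∀ i, ((t.2 i : ℚ) - (t.1 i : ℚ)) = lam i - γ i) ∧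
    (∀ h : 1 < m,
      (t.1 ⟨0, by omega⟩ = 0 →
        lam ⟨0, by omega⟩ ≤ lam ⟨1, h⟩ - (t.2 ⟨1, h⟩ : ℚ)) ∧
      (0 < t.1 ⟨0, by omega⟩ →
        -lam ⟨0, by omega⟩ ≤ lam ⟨1, h⟩ - (t.2 ⟨1, h⟩ : ℚ))) ∧
    (∀ i : Fin m, 1 ≤ (i : ℕ) → ∀ h : (i : ℕ) + 1 < m,
      lam i ≤ lam ⟨(i : ℕ) + 1, h⟩ - (t.2 ⟨(i : ℕ) + 1, h⟩ : ℚ)) ∧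
    (∀ i : Fin m, 1 ≤ (i : ℕ) → ∀ h : (i : ℕ) + 1 < m,
      lam i + (t.1 i : ℚ) - (t.2 i : ℚ) ≤
        lam ⟨(i : ℕ) + 1, h⟩ - (t.2 ⟨(i : ℕ) + 1, h⟩ : ℚ)) ∧
    (∀ h : 1 < m,
      (t.1 ⟨0, by omega⟩ = 0 → 0 ≤ γ ⟨0, by omega⟩ →
        lam ⟨0, by omega⟩ - (t.2 ⟨0, by omega⟩ : ℚ) ≤ lam ⟨1, h⟩ - (t.2 ⟨1, h⟩ : ℚ)) ∧
      (t.2 ⟨0, by omega⟩ = 0 → 0 ≤ γ ⟨0, by omega⟩ →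
        lam ⟨0, by omega⟩ + (t.1 ⟨0, by omega⟩ : ℚ) ≤ lam ⟨1, h⟩ - (t.2 ⟨1, h⟩ : ℚ)) ∧
      (t.2 ⟨0, by omega⟩ = 0 → γ ⟨0, by omega⟩ < 0 →
        -lam ⟨0, by omega⟩ - (t.1 ⟨0, by omega⟩ : ℚ) ≤ lam ⟨1, h⟩ - (t.2 ⟨1, h⟩ : ℚ)) ∧
      (t.1 ⟨0, by omega⟩ = 0 → γ ⟨0, by omega⟩ < 0 →
        -lam ⟨0, by omega⟩ + (t.2 ⟨0, by omega⟩ : ℚ) ≤ lam ⟨1, h⟩ - (t.2 ⟨1, h⟩ : ℚ)))}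

/-- The monomial `x^β = ∏ y_i ^ (2 β_i)` in the Laurent polynomial ring
`ℤ[y_1^{±1}, …, y_n^{±1}]`, realized as the group algebra of `ℤ^n`. -/
def xpow {n : ℕ} (β : Fin n → ℚ) : AddMonoidAlgebra ℤ (Fin n → ℤ) :=
  AddMonoidAlgebra.single (fun i => ⌊2 * β i⌋) 1

/-- The Weyl alternant `a_β = ∑_{σ ∈ W_{B_n}} det σ · x^{σ β}` of type `B_n`. -/
def altB {n : ℕ} (β : Fin n → ℚ) : AddMonoidAlgebra ℤ (Fin n → ℤ) :=
  ∑ σ : Equiv.Perm (Fin n), ∑ ε : Fin n → Bool, wDet σ ε • xpow (wAct σ ε β)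

/-- The Weyl alternant `a_β = ∑_{σ ∈ W_{D_n}} det σ · x^{σ β}` of type `D_n`. -/
def altD {n : ℕ} (β : Fin n → ℚ) : AddMonoidAlgebra ℤ (Fin n → ℤ) :=
  ∑ σ : Equiv.Perm (Fin n), ∑ ε : Fin n → Bool,
    if (∏ i, (if ε i then (-1 : ℤ) else 1)) = 1 then wDet σ ε • xpow (wAct σ ε β) else 0

end

/-!
Expand the Weyl group of `B_n` along the preimage of the last coordinate. The roots involving `e_n`
then split off, and what remains is an alternating sum over the Weyl group of `B_{n-1}` of Kostant
partition functions translated by the weights of the symmetric power `Sym^R V` of the vector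
representation `V`. Since these weights are permuted by the Weyl group, the translated sum is a
combination of Kostka–Foulkes polynomials of type `B_{n-1}` whose coefficients are again alternating
sums, with generating function in `R` equal to
`det (X ^ |y i - z j| - X ^ (y i + z j + 1)) / ((1 - X) * (1 - X ^ 2) ^ (n - 1))`. That determinant
factors, and the factors count the tuples in the Pieri numbers one coordinate at a time, up to the
factor `1 / (1 - X ^ 2)` that produces the sum over `r + 2m = R`.
-/

section MorrisRecurrence

open Finset

section ReflectionDeterminant

variable {A : Type*} [CommRing A]

/-- The kernel `t ^ |a - b| - t ^ (a + b + 1)` on `ℕ`, with `|a - b|` written as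
`max a b - min a b`: the weight `t ^ |x|` of the steps `b - a` and `-1 - b - a`, antisymmetrized
over the reflection `b ↦ -1 - b`. -/
def reflectionKernel (t : A) (a b : ℕ) : A := t ^ (max a b - min a b) - t ^ (a + b + 1)

lemma reflectionKernel_comm (t : A) (a b : ℕ) :
    reflectionKernel t a b = reflectionKernel t b a := by
  rw [reflectionKernel, reflectionKernel, max_comm, min_comm, add_comm a b]

lemma reflectionKernel_of_le_of_le (t : A) {a b c : ℕ} (hab : a ≤ b) (hbc : b ≤ c) :
    reflectionKernel t a c = t ^ (c - b) * reflectionKernel t a b := by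
  rw [reflectionKernel, reflectionKernel, mul_sub, ← pow_add, ← pow_add]
  congr 2 <;> grind

lemma reflectionKernel_sub_pow_mul (t : A) (a : ℕ) {b c : ℕ} (hbc : b < c) :
    reflectionKernel t a c - t ^ (c - b) * reflectionKernel t a b =
      t ^ (max a c - min a c) * (1 - t ^ (2 * (min a c - b))) := by
  have hsum : c - b + (a + b + 1) = a + c + 1 := by omega
  have hdist : c - b + (max a b - min a b) = max a c - min a c + 2 * (min a c - b) := by grind
  simp only [reflectionKernel, mul_sub, ← pow_add, hsum, hdist, mul_one]
  ring

/-- The exponents in the product formula `det_reflectionKernel`: twice the gap between the pairs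
`{y (i - 1), z (i - 1)}` and `{y i, z i}`, read as zero (by truncated subtraction) when the pairs
are not separated; the first pair is measured from `-1 / 2`. -/
def gapExponent {m : ℕ} (y z : Fin (m + 1) → ℕ) : Fin (m + 1) → ℕ :=
  Fin.cases (2 * min (y 0) (z 0) + 1) fun i =>
    2 * (min (y i.succ) (z i.succ) - max (y i.castSucc) (z i.castSucc))

lemma gapExponent_succ {m : ℕ} (y z : Fin (m + 2) → ℕ) (i : Fin (m + 1)) :
    gapExponent y z i.succ =
      2 * (min (y i.succ) (z i.succ) - max (y i.castSucc) (z i.castSucc)) := rfl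

lemma gapExponent_comm {m : ℕ} (y z : Fin (m + 1) → ℕ) : gapExponent y z = gapExponent z y := by
  funext i
  cases i using Fin.cases <;> simp [gapExponent, max_comm, min_comm]

lemma gapExponent_castSucc {m : ℕ} (y z : Fin (m + 2) → ℕ) (i : Fin (m + 1)) :
    gapExponent y z i.castSucc =
      gapExponent (y ∘ Fin.castSucc) (z ∘ Fin.castSucc) i := by
  cases i using Fin.cases <;> simp [gapExponent]

lemma det_reflectionKernel_succ (t : A) {m : ℕ} {y z : Fin (m + 2) → ℕ} (hy : Monotone y)
    (hz : StrictMono z) (hyz : y (Fin.last m).castSucc ≤ z (Fin.last m).castSucc) :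
    (Matrix.of fun i j => reflectionKernel t (y i) (z j)).det =
      (Matrix.of fun i j : Fin (m + 1) =>
          reflectionKernel t ((y ∘ Fin.castSucc) i) ((z ∘ Fin.castSucc) j)).det *
        (t ^ (max (y (Fin.last _)) (z (Fin.last _)) - min (y (Fin.last _)) (z (Fin.last _))) *
          (1 - t ^ gapExponent y z (Fin.last _))) := by
  set M := Matrix.of fun i j => reflectionKernel t (y i) (z j) with hM
  set a := z (Fin.last m).castSucc
  set b := z (Fin.last (m + 1))
  have hab : a < b := hz (Fin.castSucc_lt_last _)
  -- The column operation `col (m + 1) - t ^ (b - a) * col m` kills all but the corner entry.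
  rw [← Matrix.det_updateCol_add_smul_self M (Fin.castSucc_lt_last (Fin.last m)).ne'
    (-t ^ (b - a)), Matrix.det_succ_column _ (Fin.last (m + 1)), Fin.sum_univ_castSucc,
    Finset.sum_eq_zero, zero_add]
  · have hgap : gapExponent y z (Fin.last (m + 1)) = 2 * (min (y (Fin.last _)) b - a) := by
      rw [← Fin.succ_last, gapExponent_succ, max_eq_right hyz, Fin.succ_last]
    rw [hgap, ← reflectionKernel_sub_pow_mul t _ hab, mul_comm]
    simp only [hM, Fin.val_last, ← two_mul, pow_mul, neg_one_sq, one_pow, one_mul,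
      Matrix.updateCol_self, Matrix.of_apply, smul_eq_mul, neg_mul, ← sub_eq_add_neg]
    congr 2
    ext i j
    simp [(Fin.castSucc_lt_last j).ne]
  · intro i _
    have hi : y i.castSucc ≤ a := (hy (Fin.castSucc_le_castSucc_iff.2 (Fin.le_last i))).trans hyz
    simp [hM, reflectionKernel_of_le_of_le t hi hab.le, a, b]

theorem det_reflectionKernel (t : A) {m : ℕ} {y z : Fin (m + 1) → ℕ} (hy : StrictMono y)
    (hz : StrictMono z) :
    (Matrix.of fun i j => reflectionKernel t (y i) (z j)).det =
      ∏ i, t ^ (max (y i) (z i) - min (y i) (z i)) * (1 - t ^ gapExponent y z i) := by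
  induction m with
  | zero =>
    have hsum : y 0 + z 0 + 1 =
        max (y 0) (z 0) - min (y 0) (z 0) + (2 * min (y 0) (z 0) + 1) := by grind
    simp [gapExponent, reflectionKernel, hsum, mul_sub, ← pow_add]
  | succ m ih =>
    wlog hyz : y (Fin.last m).castSucc ≤ z (Fin.last m).castSucc generalizing y z
    · rw [← Matrix.det_transpose, gapExponent_comm]
      simp only [Matrix.transpose, Matrix.of_apply, reflectionKernel_comm t (y _),
        max_comm (y _), min_comm (y _)]
      exact this hz hy (le_of_not_ge hyz)
    have hcast := Fin.strictMono_castSucc (n := m + 1)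
    rw [det_reflectionKernel_succ t hy.monotone hz hyz, ih (hy.comp hcast) (hz.comp hcast),
      Fin.prod_univ_castSucc (n := m + 1)]
    simp only [gapExponent_castSucc, Function.comp_apply]

end ReflectionDeterminant

section PartitionSeries

variable {ι κ V : Type*} [Fintype ι] [Fintype κ]

lemma sum_piAntidiag_sumElim [DecidableEq ι] [DecidableEq κ] {M : Type*} [AddCommMonoid M]
    (k : ℕ) (f : (ι ⊕ κ → ℕ) → M) :
    ∑ c ∈ piAntidiag univ k, f c =
      ∑ p ∈ antidiagonal k, ∑ a ∈ piAntidiag univ p.1, ∑ c ∈ piAntidiag univ p.2,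
        f (Sum.elim a c) := by
  simp only [← sum_product', sum_sigma']
  refine sum_nbij'
    (fun c => ⟨(∑ i, c (Sum.inl i), ∑ i, c (Sum.inr i)), c ∘ Sum.inl, c ∘ Sum.inr⟩)
    (fun x => Sum.elim x.2.1 x.2.2) ?_ ?_ ?_ ?_ ?_
  · simp
  · rintro ⟨p, a, c⟩
    simp +contextual
  · simp
  · rintro ⟨⟨i, j⟩, a, c⟩
    simp only [mem_sigma, mem_product, mem_piAntidiag]
    rintro ⟨-, ⟨rfl, -⟩, rfl, -⟩
    rfl
  · simp

variable [AddCommGroup V] [Module ℚ V]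

/-- The `q`-analogue of Kostant's partition function for a family `r` of vectors, possibly with
repetitions: the coefficient of `q ^ k` counts the `c : ι → ℕ` of total `k` with
`∑ c i • r i = β`. -/
noncomputable def partitionSeries (r : ι → V) (β : V) : PowerSeries ℤ :=
  PowerSeries.mk fun k =>
    (Nat.card {c : ι → ℕ // (∑ i, c i) = k ∧ (∑ i, (c i : ℚ) • r i) = β} : ℤ)

lemma partitionSeries_comp_equiv (e : ι ≃ κ) (r : κ → V) (β : V) :
    partitionSeries (r ∘ e) β = partitionSeries r β := by
  ext k
  simp only [partitionSeries, PowerSeries.coeff_mk, Nat.cast_inj]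
  refine Nat.card_congr ((e.arrowCongr (Equiv.refl ℕ)).subtypeEquiv fun c => ?_)
  simp [← e.sum_comp]

lemma coeff_partitionSeries [DecidableEq ι] [DecidableEq V] (r : ι → V) (β : V) (k : ℕ) :
    PowerSeries.coeff k (partitionSeries r β) =
      ∑ c ∈ piAntidiag univ k, if ∑ i, (c i : ℚ) • r i = β then 1 else 0 := by
  rw [partitionSeries, PowerSeries.coeff_mk, sum_boole]
  exact congrArg _ (Nat.subtype_card _ (by simp))

lemma coeff_partitionSeries_sumElim [DecidableEq κ] (r : ι → V) (s : κ → V) (β : V) (k : ℕ) :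
    PowerSeries.coeff k (partitionSeries (Sum.elim r s) β) =
      ∑ p ∈ antidiagonal k, ∑ c ∈ piAntidiag univ p.2,
        PowerSeries.coeff p.1 (partitionSeries r (β - ∑ j, (c j : ℚ) • s j)) := by
  classical
  simp only [coeff_partitionSeries, sum_piAntidiag_sumElim, Fintype.sum_sum_type, Sum.elim_inl,
    Sum.elim_inr, eq_sub_iff_add_eq]
  exact sum_congr rfl fun p _ => sum_comm

end PartitionSeries

section SnocArithmetic

variable {m : ℕ}

lemma single_castSucc_eq_snoc (i : Fin m) :
    (Pi.single i.castSucc 1 : Fin (m + 1) → ℚ) =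
      Fin.snoc (α := fun _ => ℚ) (Pi.single i 1 : Fin m → ℚ) 0 := by
  funext j
  cases j using Fin.lastCases <;> simp [Pi.single_apply, (Fin.castSucc_lt_last i).ne']

lemma single_last_eq_snoc :
    (Pi.single (Fin.last m) 1 : Fin (m + 1) → ℚ) =
      Fin.snoc (α := fun _ => ℚ) (0 : Fin m → ℚ) 1 := by
  funext j
  cases j using Fin.lastCases <;> simp [(Fin.castSucc_lt_last _).ne]

lemma snoc_add_snoc (a b : Fin m → ℚ) (x y : ℚ) :
    (Fin.snoc (α := fun _ => ℚ) a x + Fin.snoc (α := fun _ => ℚ) b y : Fin (m + 1) → ℚ) =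
      Fin.snoc (α := fun _ => ℚ) (a + b) (x + y) := by
  funext j
  cases j using Fin.lastCases <;> simp

lemma snoc_sub_snoc (a b : Fin m → ℚ) (x y : ℚ) :
    (Fin.snoc (α := fun _ => ℚ) a x - Fin.snoc (α := fun _ => ℚ) b y : Fin (m + 1) → ℚ) =
      Fin.snoc (α := fun _ => ℚ) (a - b) (x - y) := by
  funext j
  cases j using Fin.lastCases <;> simp

lemma sum_smul_snoc {ι : Type*} [Fintype ι] (c : ι → ℚ) (r : ι → Fin m → ℚ) (x : ι → ℚ) :
    ∑ i, c i • (Fin.snoc (α := fun _ => ℚ) (r i) (x i) : Fin (m + 1) → ℚ) =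
      Fin.snoc (α := fun _ => ℚ) (∑ i, c i • r i) (∑ i, c i * x i) := by
  funext j
  cases j using Fin.lastCases <;> simp

end SnocArithmetic

section RootsB

variable {m : ℕ}

lemma mem_rootsB {α : Fin m → ℚ} : α ∈ rootsB m ↔
    (∃ i j : Fin m, j < i ∧ Pi.single i (1 : ℚ) - Pi.single j 1 = α) ∨
    (∃ i j : Fin m, j < i ∧ Pi.single i (1 : ℚ) + Pi.single j 1 = α) ∨
    ∃ i : Fin m, Pi.single i (1 : ℚ) = α := by
  simp [rootsB, rootsD]

/-- Index set of the weights of the vector representation of `B_m`: `some (i, b)` stands for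
`e_i` (`b = false`) or `-e_i` (`b = true`), and `none` for the zero weight. -/
abbrev VecIdx (m : ℕ) := Option (Fin m × Bool)

/-- The weights of the vector representation of `B_m`. These are also the restrictions to the first
`m` coordinates of the positive roots of `B_{m+1}` involving the last coordinate. -/
def vecWeight : VecIdx m → Fin m → ℚ
  | none => 0
  | some (i, b) => Pi.single i (if b then -1 else 1)

lemma vecWeight_injective : Function.Injective (vecWeight (m := m)) := by
  have hunit : ∀ b : Bool, (if b then -1 else 1 : ℚ) ≠ 0 := by decide
  rintro (_ | ⟨i, b⟩) (_ | ⟨j, b'⟩) h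
  · rfl
  · exact absurd h.symm (by simp [vecWeight, hunit])
  · exact absurd h (by simp [vecWeight, hunit])
  · obtain rfl : i = j := by
      by_contra hij
      simpa [vecWeight, Pi.single_eq_of_ne hij, hunit] using congrFun h i
    have := Pi.single_injective i h
    revert this
    cases b <;> cases b' <;> norm_num

/-- The positive roots of `B_{m+1}`, split according to whether they involve the last
coordinate. -/
def rootOfSum : {α // α ∈ rootsB m} ⊕ VecIdx m → Fin (m + 1) → ℚ :=
  Sum.elim (fun α => Fin.snoc (α := fun _ => ℚ) α.1 0)
    fun w => Fin.snoc (α := fun _ => ℚ) (vecWeight w) 1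

lemma rootOfSum_injective : Function.Injective (rootOfSum (m := m)) := by
  rintro (α | w) (β | w') h <;>
    simp only [rootOfSum, Sum.elim_inl, Sum.elim_inr, Fin.snoc_inj] at h
  · rw [Subtype.ext h.1]
  · exact absurd h.2 zero_ne_one
  · exact absurd h.2 one_ne_zero
  · rw [vecWeight_injective h.1]

lemma mem_rootsB_succ {α : Fin (m + 1) → ℚ} :
    α ∈ rootsB (m + 1) ↔ α ∈ Set.range (rootOfSum (m := m)) := by
  simp only [mem_rootsB, rootOfSum, Fin.exists_fin_succ', Set.mem_range, Sum.exists,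
    Subtype.exists, Sum.elim_inl, Sum.elim_inr, Option.exists, Prod.exists, Bool.exists_bool,
    vecWeight, single_castSucc_eq_snoc, single_last_eq_snoc, snoc_add_snoc, snoc_sub_snoc,
    (Fin.le_last _).not_gt, sub_self, add_zero, sub_zero, zero_sub, zero_add, exists_or,
    ← Pi.single_neg]
  aesop

lemma coeff_partitionSeries_snoc_zero {ι : Type*} [Fintype ι] (r : ι → Fin m → ℚ)
    (β : Fin m → ℚ) (x : ℚ) (k : ℕ) :
    PowerSeries.coeff k (partitionSeries (fun i => Fin.snoc (α := fun _ => ℚ) (r i) 0)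
      (Fin.snoc (α := fun _ => ℚ) β x : Fin (m + 1) → ℚ)) =
      if x = 0 then PowerSeries.coeff k (partitionSeries r β) else 0 := by
  classical
  by_cases hx : x = 0 <;>
    simp [coeff_partitionSeries, sum_smul_snoc, Fin.snoc_inj, hx, eq_comm (a := (0 : ℚ))]

lemma coeff_kostantQ_rootsB_succ (β : Fin m → ℚ) (x : ℚ) (k : ℕ) :
    PowerSeries.coeff k (kostantQ (rootsB (m + 1)) (Fin.snoc (α := fun _ => ℚ) β x)) =
      ∑ p ∈ antidiagonal k, ∑ c ∈ piAntidiag univ p.2,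
        if x = p.2 then
          PowerSeries.coeff p.1
            (kostantQ (rootsB m) (β - ∑ w : VecIdx m, (c w : ℚ) • vecWeight w))
        else 0 := by
  let e : {α // α ∈ rootsB m} ⊕ VecIdx m ≃ {α // α ∈ rootsB (m + 1)} :=
    (Equiv.ofInjective _ rootOfSum_injective).trans
      (Equiv.subtypeEquivRight fun _ => mem_rootsB_succ.symm)
  have hseries : kostantQ (rootsB (m + 1)) = partitionSeries rootOfSum :=
    funext fun β => (partitionSeries_comp_equiv e Subtype.val β).symm
  rw [hseries, rootOfSum, coeff_partitionSeries_sumElim]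
  refine sum_congr rfl fun p _ => sum_congr rfl fun c hc => ?_
  have htotal : ∑ w, (c w : ℚ) = p.2 := by exact_mod_cast (mem_piAntidiag.1 hc).1
  rw [sum_smul_snoc, snoc_sub_snoc, coeff_partitionSeries_snoc_zero]
  simp only [mul_one, htotal, sub_eq_zero]
  rfl

lemma kostantQ_rootsB_succ_natCast (β : Fin m → ℚ) (R : ℕ) :
    kostantQ (rootsB (m + 1)) (Fin.snoc (α := fun _ => ℚ) β (R : ℚ)) =
      PowerSeries.X ^ R * ∑ c ∈ piAntidiag univ R,
        kostantQ (rootsB m) (β - ∑ w : VecIdx m, (c w : ℚ) • vecWeight w) := by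
  ext k
  rw [coeff_kostantQ_rootsB_succ, PowerSeries.coeff_X_pow_mul', map_sum]
  rcases le_or_gt R k with hRk | hRk
  · rw [if_pos hRk, sum_eq_single_of_mem (k - R, R) (by simp [hRk])]
    · simp
    · rintro ⟨i, j⟩ hij hne
      have hRj : R ≠ j := by
        rintro rfl
        exact hne (Prod.ext (Nat.eq_sub_of_add_eq (mem_antidiagonal.1 hij)) rfl)
      simp [hRj]
  · rw [if_neg hRk.not_ge]
    refine sum_eq_zero fun p hp => ?_
    have hRp : R ≠ p.2 := by
      have := mem_antidiagonal.1 hp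
      omega
    simp [hRp]

lemma kostantQ_rootsB_succ_eq_zero (β : Fin m → ℚ) {x : ℚ} (hx : ∀ R : ℕ, x ≠ R) :
    kostantQ (rootsB (m + 1)) (Fin.snoc (α := fun _ => ℚ) β x) = 0 := by
  ext k
  simp [coeff_kostantQ_rootsB_succ, hx]

end RootsB

section InsertPerm

variable {m : ℕ}

/-- The permutation of `Fin (m + 1)` sending `k` to the last element and otherwise acting as `τ`,
after closing up the gap at `k`. -/
def insertPerm (k : Fin (m + 1)) (τ : Equiv.Perm (Fin m)) : Equiv.Perm (Fin (m + 1)) :=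
  (finSuccEquiv' k).trans ((Equiv.optionCongr τ).trans finSuccEquivLast.symm)

@[simp]
lemma insertPerm_self (k : Fin (m + 1)) (τ : Equiv.Perm (Fin m)) :
    insertPerm k τ k = Fin.last m := by
  simp [insertPerm]

@[simp]
lemma insertPerm_succAbove (k : Fin (m + 1)) (τ : Equiv.Perm (Fin m)) (i : Fin m) :
    insertPerm k τ (k.succAbove i) = (τ i).castSucc := by
  simp [insertPerm]

@[simp]
lemma insertPerm_inv_last (k : Fin (m + 1)) (τ : Equiv.Perm (Fin m)) :
    (insertPerm k τ)⁻¹ (Fin.last m) = k := by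
  rw [Equiv.Perm.inv_eq_iff_eq, insertPerm_self]

lemma insertPerm_inv_castSucc (k : Fin (m + 1)) (τ : Equiv.Perm (Fin m)) (i : Fin m) :
    (insertPerm k τ)⁻¹ i.castSucc = k.succAbove (τ⁻¹ i) := by
  rw [Equiv.Perm.inv_eq_iff_eq, insertPerm_succAbove]
  simp

lemma sign_insertPerm (k : Fin (m + 1)) (τ : Equiv.Perm (Fin m)) :
    Equiv.Perm.sign (insertPerm k τ) = (-1) ^ (m - (k : ℕ)) * Equiv.Perm.sign τ := by
  have hlast : insertPerm (Fin.last m) τ = finSuccEquivLast.symm.permCongr (Equiv.optionCongr τ) :=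
    rfl
  have hmul : insertPerm k τ * Fin.cycleIcc k (Fin.last m) = insertPerm (Fin.last m) τ := by
    ext1 i
    cases i using Fin.lastCases with
    | last => simp [Fin.cycleIcc_of_last (Fin.le_last k)]
    | cast i =>
      have hcycle : Fin.cycleIcc k (Fin.last m) i.castSucc = k.succAbove i := by
        rcases lt_or_ge i.castSucc k with h | h
        · rw [Fin.cycleIcc_of_lt h, Fin.succAbove_of_castSucc_lt _ _ h]
        · rw [Fin.cycleIcc_of_ge_of_lt h (Fin.castSucc_lt_last i),
            Fin.succAbove_of_le_castSucc _ _ h, Fin.coeSucc_eq_succ]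
      rw [Equiv.Perm.mul_apply, hcycle, insertPerm_succAbove, ← Fin.succAbove_last,
        insertPerm_succAbove, Fin.succAbove_last]
  have hsign := congrArg Equiv.Perm.sign hmul
  rw [Equiv.Perm.sign_mul, Fin.sign_cycleIcc_of_le (Fin.le_last k), hlast,
    Equiv.Perm.sign_permCongr, Equiv.optionCongr_sign, Fin.val_last] at hsign
  rw [← hsign, mul_comm, mul_assoc, ← mul_pow, neg_one_mul, neg_neg, one_pow, mul_one]

lemma insertPerm_bijective :
    Function.Bijective fun p : Fin (m + 1) × Equiv.Perm (Fin m) => insertPerm p.1 p.2 := by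
  rw [Fintype.bijective_iff_injective_and_card]
  refine ⟨?_, by simp [Fintype.card_perm, Nat.factorial_succ]⟩
  rintro ⟨k, τ⟩ ⟨k', τ'⟩ (h : insertPerm k τ = insertPerm k' τ')
  obtain rfl : k = k' := by
    rw [← insertPerm_inv_last k τ, h, insertPerm_inv_last]
  have hτ : τ = τ' := by
    ext1 i
    apply Fin.castSucc_injective
    rw [← insertPerm_succAbove k τ, h, insertPerm_succAbove]
  rw [hτ]

end InsertPerm

section WeylAltSum

variable {m : ℕ} {M : Type*} [AddCommGroup M]

/-- The alternating sum of `G` over the orbit of `x` under the Weyl group of type `B_m`. -/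
def weylAltSum (G : (Fin m → ℚ) → M) (x : Fin m → ℚ) : M :=
  ∑ τ : Equiv.Perm (Fin m), ∑ ε : Fin m → Bool, wDet τ ε • G (wAct τ ε x)

lemma weylAltSum_succ (G : (Fin (m + 1) → ℚ) → M) (x : Fin (m + 1) → ℚ) :
    weylAltSum G x =
      ∑ k : Fin (m + 1), ∑ b : Bool, ((-1 : ℤ) ^ (m - (k : ℕ)) * (if b then -1 else 1)) •
        weylAltSum
          (fun β => G (Fin.snoc (α := fun _ => ℚ) β ((if b then -1 else 1) * x k)))
          (x ∘ k.succAbove) := by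
  rw [weylAltSum, ← insertPerm_bijective.sum_comp fun σ => ∑ ε, wDet σ ε • G (wAct σ ε x),
    Fintype.sum_prod_type]
  refine sum_congr rfl fun k _ => ?_
  simp only [weylAltSum, smul_sum, smul_smul]
  conv_rhs => rw [sum_comm]
  refine sum_congr rfl fun τ _ => ?_
  rw [← (Fin.snocEquiv fun _ => Bool).sum_comp, Fintype.sum_prod_type]
  refine sum_congr rfl fun b _ => sum_congr rfl fun ε _ => ?_
  congr 2
  · simp only [wDet, sign_insertPerm, Fin.snocEquiv_apply, Fin.prod_univ_castSucc,
      Fin.snoc_castSucc, Fin.snoc_last]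
    push_cast
    ring
  · funext i
    cases i using Fin.lastCases <;> simp [wAct, insertPerm_inv_castSucc]

/-- The second component of the product `(τ, ε) * (τ₀, ε₀)` of two signed permutations. -/
def signMul (τ : Equiv.Perm (Fin m)) (ε ε₀ : Fin m → Bool) : Fin m → Bool :=
  fun i => xor (ε i) (ε₀ (τ⁻¹ i))

lemma ite_xor_neg_one {R : Type*} [Ring R] (a b : Bool) :
    (if xor a b then (-1 : R) else 1) = (if a then -1 else 1) * (if b then -1 else 1) := by
  cases a <;> cases b <;> simp

lemma wAct_wAct (τ τ₀ : Equiv.Perm (Fin m)) (ε ε₀ : Fin m → Bool) (x : Fin m → ℚ) :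
    wAct τ ε (wAct τ₀ ε₀ x) = wAct (τ * τ₀) (signMul τ ε ε₀) x := by
  funext i
  rw [wAct, wAct, wAct, signMul, ite_xor_neg_one, mul_assoc, mul_inv_rev, Equiv.Perm.mul_apply]

lemma wDet_mul (τ τ₀ : Equiv.Perm (Fin m)) (ε ε₀ : Fin m → Bool) :
    wDet (τ * τ₀) (signMul τ ε ε₀) = wDet τ ε * wDet τ₀ ε₀ := by
  have hprod : ∏ i, (if signMul τ ε ε₀ i then (-1 : ℤ) else 1) =
      (∏ i, if ε i then (-1 : ℤ) else 1) * ∏ i, if ε₀ i then (-1 : ℤ) else 1 := by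
    rw [← Equiv.prod_comp τ⁻¹ fun i => if ε₀ i then (-1 : ℤ) else 1, ← prod_mul_distrib]
    exact prod_congr rfl fun i _ => ite_xor_neg_one _ _
  rw [wDet, wDet, wDet, hprod, Equiv.Perm.sign_mul]
  push_cast
  ring

lemma wDet_mul_self (τ : Equiv.Perm (Fin m)) (ε : Fin m → Bool) : wDet τ ε * wDet τ ε = 1 := by
  have hsign : ∏ i, ((if ε i then (-1 : ℤ) else 1) * if ε i then -1 else 1) = 1 :=
    prod_eq_one fun i _ => by cases ε i <;> simp
  rw [wDet, mul_mul_mul_comm, ← prod_mul_distrib, hsign, ← Units.val_mul, Int.units_mul_self,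
    Units.val_one, mul_one]

lemma weylAltSum_wAct (G : (Fin m → ℚ) → M) (τ₀ : Equiv.Perm (Fin m)) (ε₀ : Fin m → Bool)
    (x : Fin m → ℚ) : weylAltSum G (wAct τ₀ ε₀ x) = wDet τ₀ ε₀ • weylAltSum G x := by
  rw [weylAltSum, weylAltSum]
  conv_rhs => rw [← Equiv.sum_comp (Equiv.mulRight τ₀), smul_sum]
  refine sum_congr rfl fun τ _ => ?_
  have hinv : Function.Involutive fun ε => signMul τ ε ε₀ := fun ε => by
    funext i
    simp [signMul]
  conv_rhs => rw [← Equiv.sum_comp (hinv.toPerm _), smul_sum]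
  refine sum_congr rfl fun ε _ => ?_
  rw [hinv.coe_toPerm, Equiv.coe_mulRight, wAct_wAct, wDet_mul, smul_smul, mul_left_comm,
    wDet_mul_self, mul_one]

lemma weylAltSum_eq_zero_of_abs_eq [IsAddTorsionFree M] (G : (Fin m → ℚ) → M) {x : Fin m → ℚ}
    {i j : Fin m} (hij : i ≠ j) (habs : |x i| = |x j|) : weylAltSum G x = 0 := by
  obtain ⟨b, hb⟩ : ∃ b : Bool, x i = (if b then -1 else 1) * x j :=
    (abs_eq_abs.1 habs).elim (fun h => ⟨false, by simpa⟩) fun h => ⟨true, by simpa⟩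
  -- The reflection exchanging the coordinates `i` and `j`, up to sign, fixes `x`.
  let ε : Fin m → Bool := fun k => b && decide (k = i ∨ k = j)
  have hfix : wAct (Equiv.swap i j) ε x = x := by
    funext k
    simp only [wAct, Equiv.swap_inv]
    rcases eq_or_ne k i with rfl | hki
    · cases b <;> simp_all [ε]
    · rcases eq_or_ne k j with rfl | hkj
      · cases b <;> simp_all [ε]
      · simp [ε, hki, hkj, Equiv.swap_apply_of_ne_of_ne]
  have hprod : ∏ k, (if ε k then (-1 : ℤ) else 1) = 1 := by
    cases b
    · simp [ε]
    · have hmem (k : Fin m) : ε k = true ↔ k ∈ ({i, j} : Finset (Fin m)) := by simp [ε]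
      simp only [hmem, prod_ite_mem, univ_inter, prod_pair hij]
      norm_num
  have hdet : wDet (Equiv.swap i j) ε = -1 := by simp [wDet, hprod, Equiv.Perm.sign_swap hij]
  have hneg := weylAltSum_wAct G (Equiv.swap i j) ε x
  rwa [hfix, hdet, neg_one_smul, self_eq_neg] at hneg

end WeylAltSum

section WeylOrbits

variable {m : ℕ} {M : Type*} [AddCommGroup M]

lemma weylAltSum_prod_eq_det {A : Type*} [CommRing A] (g : Fin m → ℚ → A) (x : Fin m → ℚ) :
    weylAltSum (fun β => ∏ i, g i (β i)) x =
      (Matrix.of fun i j => g i (x j) - g i (-x j)).det := by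
  rw [Matrix.det_apply', weylAltSum]
  refine sum_congr rfl fun τ _ => ?_
  have hentry (i : Fin m) : g i (x (τ⁻¹ i)) - g i (-x (τ⁻¹ i)) =
      ∑ b : Bool, ((if b then -1 else 1 : ℤ) : A) * g i ((if b then -1 else 1) * x (τ⁻¹ i)) := by
    rw [Fintype.sum_bool]
    simp [neg_add_eq_sub]
  have hprod : ∏ i, (g (τ i) (x i) - g (τ i) (-x i)) =
      ∏ i, (g i (x (τ⁻¹ i)) - g i (-x (τ⁻¹ i))) := by
    rw [← Equiv.prod_comp τ fun i => g i (x (τ⁻¹ i)) - g i (-x (τ⁻¹ i))]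
    simp
  simp only [Matrix.of_apply]
  rw [hprod, prod_congr rfl fun i _ => hentry i, prod_univ_sum, Fintype.piFinset_univ, mul_sum]
  refine sum_congr rfl fun ε _ => ?_
  rw [prod_mul_distrib, zsmul_eq_mul, wDet]
  push_cast
  rw [mul_assoc]
  rfl

lemma wAct_injective_of_strictMono {τ τ' : Equiv.Perm (Fin m)} {ε ε' : Fin m → Bool}
    {x x' : Fin m → ℚ} (hx : StrictMono x) (hx' : StrictMono x') (hpos : ∀ i, 0 < x i)
    (hpos' : ∀ i, 0 < x' i) (h : wAct τ ε x = wAct τ' ε' x') : τ = τ' ∧ ε = ε' ∧ x = x' := by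
  have habs (i : Fin m) : ε i = ε' i ∧ x (τ⁻¹ i) = x' (τ'⁻¹ i) := by
    have hi := congrFun h i
    have := hpos (τ⁻¹ i)
    have := hpos' (τ'⁻¹ i)
    simp only [wAct] at hi
    cases hε : ε i <;> cases hε' : ε' i <;>
      simp only [hε, hε', if_true, Bool.false_eq_true, if_false] at hi <;>
      first | exact ⟨rfl, by linarith⟩ | linarith
  have hcomp : x ∘ ⇑τ⁻¹ = x' ∘ ⇑τ'⁻¹ := funext fun i => (habs i).2
  have hxx : x = x' := by
    rw [← hx.range_inj hx', ← τ⁻¹.surjective.range_comp x, hcomp, τ'⁻¹.surjective.range_comp]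
  subst hxx
  exact ⟨inv_injective (Equiv.ext fun i => hx.injective (congrFun hcomp i)),
    funext fun i => (habs i).1, rfl⟩

lemma exists_wAct_eq {β : Fin m → ℚ} (hβ : Function.Injective fun i => |β i|) :
    ∃ (τ : Equiv.Perm (Fin m)) (ε : Fin m → Bool),
      StrictMono (fun i => |β (τ i)|) ∧ wAct τ ε (fun i => |β (τ i)|) = β := by
  refine ⟨Tuple.sort fun i => |β i|, fun i => decide (β i < 0),
    (Tuple.monotone_sort _).strictMono_of_injective (hβ.comp (Equiv.injective _)), ?_⟩
  funext i
  rcases lt_or_ge (β i) 0 with h | h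
  · simp [wAct, h, abs_of_neg h]
  · simp [wAct, h.not_gt, abs_of_nonneg h]

lemma weylAltSum_indicator_smul (G : (Fin m → ℚ) → M) (x β : Fin m → ℚ) :
    weylAltSum (fun γ => if γ = β then (1 : ℤ) else 0) x • weylAltSum G x =
      #{p : Equiv.Perm (Fin m) × (Fin m → Bool) | wAct p.1 p.2 x = β} • weylAltSum G β := by
  rw [weylAltSum, ← Fintype.sum_prod_type', sum_smul, card_eq_sum_ones, sum_smul, sum_filter]
  refine sum_congr rfl fun p _ => ?_
  split_ifs with hp
  · rw [one_smul, smul_eq_mul, mul_one, ← weylAltSum_wAct, hp]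
  · rw [smul_zero, zero_smul]

end WeylOrbits

section Chamber

variable {m : ℕ} {M : Type*} [AddCommGroup M]

/-- The half-integral weight `z + (1/2, …, 1/2)`. -/
def addHalf (z : Fin m → ℕ) : Fin m → ℚ := fun i => z i + 1 / 2

lemma addHalf_pos (z : Fin m → ℕ) (i : Fin m) : 0 < addHalf z i := by
  unfold addHalf
  positivity

lemma strictMono_addHalf {z : Fin m → ℕ} : StrictMono (addHalf z) ↔ StrictMono z := by
  simp [addHalf, StrictMono]

lemma addHalf_injective : Function.Injective (addHalf : (Fin m → ℕ) → Fin m → ℚ) := by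
  intro z z' h
  funext i
  simpa [addHalf] using congrFun h i

/-- The strictly increasing vectors with entries below `L`. Their half-integral shifts represent
the regular orbits of half-integral weights under the Weyl group. -/
def strictChamber (m L : ℕ) : Finset (Fin m → ℕ) :=
  {z ∈ Fintype.piFinset fun _ => range L | StrictMono z}

lemma mem_strictChamber {L : ℕ} {z : Fin m → ℕ} :
    z ∈ strictChamber m L ↔ (∀ i, z i < L) ∧ StrictMono z := by
  simp [strictChamber]

lemma existsUnique_wAct_addHalf {β : Fin m → ℚ} {L : ℕ} (hβ : Function.Injective fun i => |β i|)
    (hL : ∀ i, ∃ n < L, |β i| = (n : ℚ) + 1 / 2) :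
    ∃! p : (Fin m → ℕ) × Equiv.Perm (Fin m) × (Fin m → Bool),
      p.1 ∈ strictChamber m L ∧ wAct p.2.1 p.2.2 (addHalf p.1) = β := by
  choose n hnL hn using hL
  obtain ⟨τ, ε, hmono, hτε⟩ := exists_wAct_eq hβ
  have hz : addHalf (n ∘ τ) = fun i => |β (τ i)| := funext fun i => (hn (τ i)).symm
  rw [← hz] at hmono hτε
  have hmem : n ∘ τ ∈ strictChamber m L :=
    mem_strictChamber.2 ⟨fun i => hnL _, strictMono_addHalf.1 hmono⟩
  refine ⟨(n ∘ τ, τ, ε), ⟨hmem, hτε⟩, ?_⟩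
  rintro ⟨z, τ', ε'⟩ ⟨hzL, hz'⟩
  obtain ⟨rfl, rfl, h⟩ := wAct_injective_of_strictMono
    (strictMono_addHalf.2 (mem_strictChamber.1 hzL).2) hmono (addHalf_pos _) (addHalf_pos _)
    (hz'.trans hτε.symm)
  exact Prod.ext (addHalf_injective h) rfl

theorem weylAltSum_eq_sum_strictChamber [IsAddTorsionFree M] (G : (Fin m → ℚ) → M)
    {β : Fin m → ℚ} {L : ℕ} (hL : ∀ i, ∃ n < L, |β i| = (n : ℚ) + 1 / 2) :
    weylAltSum G β = ∑ z ∈ strictChamber m L,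
      weylAltSum (fun γ => if γ = β then (1 : ℤ) else 0) (addHalf z) •
        weylAltSum G (addHalf z) := by
  simp only [weylAltSum_indicator_smul, ← sum_smul]
  by_cases hβ : Function.Injective fun i => |β i|
  · obtain ⟨p, hp, hunique⟩ := existsUnique_wAct_addHalf hβ hL
    have hcard : #{p ∈ strictChamber m L ×ˢ (univ : Finset (Equiv.Perm (Fin m) × (Fin m → Bool))) |
        wAct p.2.1 p.2.2 (addHalf p.1) = β} = 1 := by
      refine card_eq_one.2 ⟨p, ?_⟩
      ext p'
      simp only [mem_filter, mem_product, mem_univ, and_true, mem_singleton]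
      exact ⟨hunique p', fun h => h ▸ hp⟩
    rw [card_filter, sum_product] at hcard
    simp only [card_filter, hcard, one_smul]
  · obtain ⟨i, j, habs, hij⟩ := Function.not_injective_iff.1 hβ
    rw [weylAltSum_eq_zero_of_abs_eq G hij habs, smul_zero]

end Chamber

section VectorWeights

variable {m : ℕ} {M : Type*} [AddCommGroup M]

lemma wAct_add_sum_smul {ι : Type*} [Fintype ι] (τ : Equiv.Perm (Fin m)) (ε : Fin m → Bool)
    (x : Fin m → ℚ) (c : ι → ℚ) (w : ι → Fin m → ℚ) :
    wAct τ ε (x + ∑ v, c v • w v) = wAct τ ε x + ∑ v, c v • wAct τ ε (w v) := by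
  funext i
  simp only [wAct, Pi.add_apply, Finset.sum_apply, Pi.smul_apply, smul_eq_mul, mul_add, mul_sum,
    mul_left_comm]

/-- The permutation of the weights of the vector representation induced by minus the signed
permutation `(τ, ε)`. -/
def vecPerm (τ : Equiv.Perm (Fin m)) (ε : Fin m → Bool) : Equiv.Perm (VecIdx m) :=
  Equiv.optionCongr (Equiv.prodShear τ fun i => if ε (τ i) then Equiv.refl _ else Equiv.boolNot)

lemma vecWeight_vecPerm (τ : Equiv.Perm (Fin m)) (ε : Fin m → Bool) (v : VecIdx m) :
    vecWeight (vecPerm τ ε v) = -wAct τ ε (vecWeight v) := by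
  funext k
  rcases v with _ | ⟨i, b⟩
  · simp [vecPerm, vecWeight, wAct]
  · rcases eq_or_ne k (τ i) with rfl | hk
    · cases h : ε (τ i) <;> cases b <;> simp [vecPerm, vecWeight, wAct, h]
    · have hk' : τ.symm k ≠ i := fun h => hk ((Equiv.symm_apply_eq τ).1 h)
      simp [vecPerm, vecWeight, wAct, Pi.single_eq_of_ne hk, Pi.single_eq_of_ne hk']

lemma sum_smul_vecWeight_apply (c : VecIdx m → ℚ) (i : Fin m) :
    (∑ v, c v • vecWeight v) i = c (some (i, false)) - c (some (i, true)) := by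
  simp [Fintype.sum_option, Fintype.sum_prod_type, vecWeight, Pi.single_apply,
    Finset.sum_apply, sub_eq_neg_add]

lemma weylAltSum_sum_sub (G : (Fin m → ℚ) → M) (x : Fin m → ℚ) (R : ℕ) :
    weylAltSum (fun β => ∑ c ∈ piAntidiag univ R, G (β - ∑ v : VecIdx m, (c v : ℚ) • vecWeight v))
        x =
      ∑ c ∈ piAntidiag univ R, weylAltSum G (x + ∑ v : VecIdx m, (c v : ℚ) • vecWeight v) := by
  simp only [weylAltSum, smul_sum]
  conv_rhs => rw [sum_comm]
  refine sum_congr rfl fun τ _ => ?_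
  conv_rhs => rw [sum_comm]
  refine sum_congr rfl fun ε _ => ?_
  refine sum_equiv ((vecPerm τ ε).symm.arrowCongr (Equiv.refl ℕ))
    (fun c => ?_) fun c _ => ?_
  · rw [mem_piAntidiag, mem_piAntidiag, ← Equiv.sum_comp (vecPerm τ ε) c]
    simp only [mem_univ, implies_true, and_true]
    rfl
  rw [wAct_add_sum_smul, ← Equiv.sum_comp (vecPerm τ ε) fun v => (c v : ℚ) • vecWeight v]
  simp [vecWeight_vecPerm, sub_eq_add_neg]

lemma exists_abs_addHalf_add_eq {y : Fin m → ℕ} {R : ℕ} {c : VecIdx m → ℕ}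
    (hc : c ∈ piAntidiag univ R) (i : Fin m) :
    ∃ n ≤ y i + R, |(addHalf y + ∑ v, (c v : ℚ) • vecWeight v) i| = (n : ℚ) + 1 / 2 := by
  have hle (v : VecIdx m) : c v ≤ R :=
    (single_le_sum (fun _ _ => Nat.zero_le _) (mem_univ v)).trans_eq (mem_piAntidiag.1 hc).1
  have hfalse := hle (some (i, false))
  have htrue := hle (some (i, true))
  rw [Pi.add_apply, sum_smul_vecWeight_apply, addHalf]
  generalize c (some (i, false)) = a at *
  generalize c (some (i, true)) = b at *
  rcases le_or_gt b (y i + a) with h | h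
  · refine ⟨y i + a - b, by omega, ?_⟩
    push_cast [h]
    rw [abs_of_nonneg] <;> linarith [(by exact_mod_cast h : (b : ℚ) ≤ y i + a)]
  · refine ⟨b - (y i + a + 1), by omega, ?_⟩
    have h' : (y i + a + 1 : ℚ) ≤ b := by exact_mod_cast h
    push_cast [Nat.succ_le_of_lt h]
    rw [abs_of_neg] <;> linarith

theorem sum_weylAltSum_add_vecWeight [IsAddTorsionFree M] (G : (Fin m → ℚ) → M) {y : Fin m → ℕ}
    {R L : ℕ} (hL : ∀ i, y i + R < L) :
    ∑ c ∈ piAntidiag univ R,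
        weylAltSum G (addHalf y + ∑ v : VecIdx m, (c v : ℚ) • vecWeight v) =
      ∑ z ∈ strictChamber m L,
        weylAltSum (fun β => PowerSeries.coeff R (partitionSeries vecWeight (β - addHalf y)))
          (addHalf z) • weylAltSum G (addHalf z) := by
  have hfold (c : VecIdx m → ℕ) (hc : c ∈ piAntidiag univ R) :=
    weylAltSum_eq_sum_strictChamber G fun i => by
      obtain ⟨n, hn, h⟩ := exists_abs_addHalf_add_eq hc i
      exact ⟨n, hn.trans_lt (hL i), h⟩
  rw [sum_congr rfl hfold, sum_comm]
  refine sum_congr rfl fun z _ => ?_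
  rw [← sum_smul]
  congr 1
  simp only [weylAltSum, coeff_partitionSeries, smul_sum, eq_sub_iff_add_eq',
    eq_comm (a := wAct _ _ _)]
  rw [sum_comm]
  exact sum_congr rfl fun τ _ => sum_comm

end VectorWeights

section IndicatorSeries

/-- The generating series of a set `S` of exponents. -/
noncomputable def indicatorSeries (S : Set ℕ) : PowerSeries ℤ := PowerSeries.mk (S.indicator 1)

lemma coeff_prod_indicatorSeries {ι : Type*} [Fintype ι] (S : ι → Set ℕ) (R : ℕ) :
    PowerSeries.coeff R (∏ i, indicatorSeries (S i)) =
      Nat.card {l : ι → ℕ // ∑ i, l i = R ∧ ∀ i, l i ∈ S i} := by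
  classical
  have hcard : Nat.card {l : ι → ℕ // ∑ i, l i = R ∧ ∀ i, l i ∈ S i} =
      #{l ∈ piAntidiag univ R | ∀ i, l i ∈ S i} := Nat.subtype_card _ (by simp)
  rw [hcard, PowerSeries.coeff_prod, ← sum_boole]
  refine sum_equiv Finsupp.equivFunOnFinite (by simp) fun l _ => ?_
  simp [indicatorSeries, Set.indicator_apply, prod_ite_zero]

lemma indicatorSeries_univ_mul : indicatorSeries Set.univ * (1 - PowerSeries.X) = 1 := by
  simpa [indicatorSeries] using PowerSeries.mk_one_mul_one_sub_eq_one ℤ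

lemma indicatorSeries_even_sub_mul (d : ℕ) :
    indicatorSeries {k | d ≤ k ∧ Even (k - d)} * (1 - PowerSeries.X ^ 2) = PowerSeries.X ^ d := by
  classical
  ext k
  rw [mul_sub, mul_one, map_sub, PowerSeries.coeff_mul_X_pow', PowerSeries.coeff_X_pow]
  simp only [indicatorSeries, PowerSeries.coeff_mk, Set.indicator_apply, Set.mem_ofPred_eq,
    Nat.even_iff, Pi.one_apply]
  split_ifs <;> omega

/-- The set of exponents `d, d + s, …, d + (n - 1) s`. -/
def arithRange (d s n : ℕ) : Finset ℕ := (range n).image fun a => d + s * a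

lemma mem_arithRange {d s n k : ℕ} : k ∈ arithRange d s n ↔ ∃ a < n, d + s * a = k := by
  simp [arithRange]

lemma indicatorSeries_arithRange_mul (d n : ℕ) {s : ℕ} (hs : s ≠ 0) :
    indicatorSeries (arithRange d s n) * (1 - PowerSeries.X ^ s) =
      PowerSeries.X ^ d * (1 - (PowerSeries.X ^ s) ^ n) := by
  classical
  have hsum : indicatorSeries (arithRange d s n) =
      PowerSeries.X ^ d * ∑ a ∈ range n, (PowerSeries.X ^ s) ^ a := by
    ext k
    have hinj : Set.InjOn (fun a => d + s * a) (range n) := fun a _ b _ h => by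
      simpa [hs] using h
    rw [indicatorSeries, PowerSeries.coeff_mk, Set.indicator_apply, mul_sum, map_sum, arithRange]
    simp only [mem_coe, Pi.one_apply]
    rw [← sum_ite_eq _ k fun _ => (1 : ℤ), sum_image hinj]
    simp only [← pow_mul, ← pow_add, PowerSeries.coeff_X_pow]
  rw [hsum, mul_assoc, geom_sum_mul_neg]

end IndicatorSeries

section VectorSeries

variable {m : ℕ}

lemma sum_smul_vecWeight_eq_iff (c : VecIdx m → ℕ) (d : Fin m → ℤ) :
    ∑ v, (c v : ℚ) • vecWeight v = (fun i => (d i : ℚ)) ↔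
      ∀ i, (c (some (i, false)) : ℤ) - c (some (i, true)) = d i := by
  simp only [funext_iff, sum_smul_vecWeight_apply]
  exact forall_congr' fun i => by exact_mod_cast Iff.rfl

/-- The number of uses of the zero weight and of each pair `±e_i` in the family `c` of weights. -/
def mergeSigns (c : VecIdx m → ℕ) : Option (Fin m) → ℕ := fun x =>
  x.elim (c none) fun i => c (some (i, false)) + c (some (i, true))

/-- The family of weights which uses `l (some i)` times the pair `±e_i` with difference `d i`. -/
def splitSigns (d : Fin m → ℤ) (l : Option (Fin m) → ℕ) : VecIdx m → ℕ := fun v =>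
  v.elim (l none) fun p => (((l (some p.1) : ℤ) + if p.2 then -d p.1 else d p.1) / 2).toNat

/-- The possible numbers of uses of the zero weight and of each pair `±e_i` in a family of weights
with sum `d`. -/
def signTotals (d : Fin m → ℤ) (x : Option (Fin m)) : Set ℕ :=
  x.elim Set.univ fun i => {k | (d i).natAbs ≤ k ∧ Even (k - (d i).natAbs)}

lemma sum_mergeSigns (c : VecIdx m → ℕ) : ∑ x, mergeSigns c x = ∑ v, c v := by
  simp [mergeSigns, Fintype.sum_option, Fintype.sum_prod_type, add_comm]

lemma mergeSigns_mem_signTotals {c : VecIdx m → ℕ} {d : Fin m → ℤ}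
    (hd : ∀ i, (c (some (i, false)) : ℤ) - c (some (i, true)) = d i) (x : Option (Fin m)) :
    mergeSigns c x ∈ signTotals d x := by
  rcases x with _ | i
  · trivial
  · have := hd i
    simp only [mergeSigns, signTotals, Option.elim, Set.mem_ofPred_eq, Nat.even_iff]
    omega

lemma splitSigns_sub_splitSigns {d : Fin m → ℤ} {l : Option (Fin m) → ℕ}
    (hl : ∀ x, l x ∈ signTotals d x) (i : Fin m) :
    (splitSigns d l (some (i, false)) : ℤ) - splitSigns d l (some (i, true)) = d i := by
  have := hl (some i)
  simp only [signTotals, Option.elim, Set.mem_ofPred_eq, Nat.even_iff] at this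
  simp only [splitSigns, Option.elim, if_true, Bool.false_eq_true, if_false]
  omega

lemma mergeSigns_splitSigns {d : Fin m → ℤ} {l : Option (Fin m) → ℕ}
    (hl : ∀ x, l x ∈ signTotals d x) : mergeSigns (splitSigns d l) = l := by
  funext x
  rcases x with _ | i
  · rfl
  · have := hl (some i)
    simp only [signTotals, Option.elim, Set.mem_ofPred_eq, Nat.even_iff] at this
    simp only [mergeSigns, splitSigns, Option.elim, if_true, Bool.false_eq_true, if_false]
    omega

lemma splitSigns_mergeSigns {c : VecIdx m → ℕ} {d : Fin m → ℤ}
    (hd : ∀ i, (c (some (i, false)) : ℤ) - c (some (i, true)) = d i) :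
    splitSigns d (mergeSigns c) = c := by
  funext v
  rcases v with _ | ⟨i, _ | _⟩ <;> simp [splitSigns, mergeSigns, ← hd] <;> omega

/-- Merging signs identifies the families of `R` weights with sum `d`. -/
def vecFamilyEquiv (R : ℕ) (d : Fin m → ℤ) :
    {c : VecIdx m → ℕ // ∑ v, c v = R ∧ ∑ v, (c v : ℚ) • vecWeight v = fun i => (d i : ℚ)} ≃
      {l : Option (Fin m) → ℕ // ∑ x, l x = R ∧ ∀ x, l x ∈ signTotals d x} where
  toFun c := ⟨mergeSigns c.1, (sum_mergeSigns _).trans c.2.1,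
    mergeSigns_mem_signTotals ((sum_smul_vecWeight_eq_iff _ _).1 c.2.2)⟩
  invFun l := ⟨splitSigns d l.1,
    by rw [← sum_mergeSigns, mergeSigns_splitSigns l.2.2, l.2.1],
    (sum_smul_vecWeight_eq_iff _ _).2 (splitSigns_sub_splitSigns l.2.2)⟩
  left_inv c := Subtype.ext <| splitSigns_mergeSigns ((sum_smul_vecWeight_eq_iff _ _).1 c.2.2)
  right_inv l := Subtype.ext <| mergeSigns_splitSigns l.2.2

lemma partitionSeries_vecWeight_mul (d : Fin m → ℤ) :
    partitionSeries vecWeight (fun i => (d i : ℚ)) *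
        ((1 - PowerSeries.X) * (1 - PowerSeries.X ^ 2) ^ m) =
      ∏ i, PowerSeries.X ^ (d i).natAbs := by
  have hprod : partitionSeries vecWeight (fun i => (d i : ℚ)) =
      ∏ x : Option (Fin m), indicatorSeries (signTotals d x) := by
    ext R
    rw [coeff_prod_indicatorSeries, partitionSeries, PowerSeries.coeff_mk,
      Nat.card_congr (vecFamilyEquiv R d)]
  have hpow : (1 - PowerSeries.X ^ 2 : PowerSeries ℤ) ^ m =
      ∏ _i : Fin m, (1 - PowerSeries.X ^ 2) := by
    simp
  rw [hprod, Fintype.prod_option, hpow, mul_mul_mul_comm, ← prod_mul_distrib]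
  simp only [signTotals, Option.elim, indicatorSeries_univ_mul, indicatorSeries_even_sub_mul,
    one_mul]

end VectorSeries

section VectorDeterminant

variable {m : ℕ}

lemma weylAltSum_congr {M : Type*} [AddCommGroup M] {G G' : (Fin m → ℚ) → M} {x : Fin m → ℚ}
    (h : ∀ τ ε, G (wAct τ ε x) = G' (wAct τ ε x)) : weylAltSum G x = weylAltSum G' x := by
  simp only [weylAltSum, h]

lemma map_weylAltSum {M N : Type*} [AddCommGroup M] [AddCommGroup N] (f : M →+ N)
    (G : (Fin m → ℚ) → M) (x : Fin m → ℚ) :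
    f (weylAltSum G x) = weylAltSum (fun β => f (G β)) x := by
  simp only [weylAltSum, map_sum, map_zsmul]

lemma wAct_addHalf_sub_addHalf (τ : Equiv.Perm (Fin m)) (ε : Fin m → Bool) (y z : Fin m → ℕ) :
    ∃ d : Fin m → ℤ, wAct τ ε (addHalf z) - addHalf y = fun i => (d i : ℚ) := by
  refine ⟨fun i => (if ε i then -1 - (z (τ⁻¹ i) : ℤ) else z (τ⁻¹ i)) - y i, funext fun i => ?_⟩
  simp only [wAct, addHalf, Pi.sub_apply]
  split_ifs <;> push_cast <;> ring

theorem weylAltSum_partitionSeries_vecWeight_mul (y z : Fin m → ℕ) :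
    weylAltSum (fun β => partitionSeries vecWeight (β - addHalf y)) (addHalf z) *
        ((1 - PowerSeries.X) * (1 - PowerSeries.X ^ 2) ^ m) =
      (Matrix.of fun i j => reflectionKernel PowerSeries.X (y i) (z j)).det := by
  have hprod (τ : Equiv.Perm (Fin m)) (ε : Fin m → Bool) :
      partitionSeries vecWeight (wAct τ ε (addHalf z) - addHalf y) *
        ((1 - PowerSeries.X) * (1 - PowerSeries.X ^ 2) ^ m) =
      ∏ i, PowerSeries.X ^ ⌊wAct τ ε (addHalf z) i - addHalf y i⌋.natAbs := by
    obtain ⟨d, hd⟩ := wAct_addHalf_sub_addHalf τ ε y z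
    have hfloor (i : Fin m) : ⌊wAct τ ε (addHalf z) i - addHalf y i⌋ = d i := by
      rw [← Pi.sub_apply, hd, Int.floor_intCast]
    simp only [hd, partitionSeries_vecWeight_mul, hfloor]
  refine (map_weylAltSum (AddMonoidHom.mulRight ((1 - PowerSeries.X) * (1 - PowerSeries.X ^ 2) ^ m))
    (fun β => partitionSeries vecWeight (β - addHalf y)) (addHalf z)).trans ?_
  refine (weylAltSum_congr hprod).trans <|
    (weylAltSum_prod_eq_det (fun i b => PowerSeries.X ^ ⌊b - addHalf y i⌋.natAbs) _).trans ?_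
  congr 1
  ext1 i j
  have hpos : addHalf z j - addHalf y i = ((z j - y i : ℤ) : ℚ) := by
    simp only [addHalf]
    push_cast
    ring
  have hneg : -addHalf z j - addHalf y i = ((-(y i + z j + 1) : ℤ) : ℚ) := by
    simp only [addHalf]
    push_cast
    ring
  have habs : (z j - y i : ℤ).natAbs = max (y i) (z j) - min (y i) (z j) := by omega
  have habs' : (-(y i + z j + 1) : ℤ).natAbs = y i + z j + 1 := by omega
  rw [Matrix.of_apply, Matrix.of_apply, hpos, hneg, Int.floor_intCast, Int.floor_intCast, habs,
    habs', reflectionKernel]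

end VectorDeterminant

section PieriNumbers

variable {m : ℕ}

/-- The weight `λ` with `λ + ρ = addHalf z`. -/
def ofShifted (z : Fin m → ℕ) : Fin m → ℚ := fun i => (z i : ℚ) - (i : ℕ)

lemma ofShifted_add_rhoB (z : Fin m → ℕ) : ofShifted z + rhoB m = addHalf z := by
  funext i
  simp only [Pi.add_apply, ofShifted, rhoB, addHalf]
  ring

/-- The tuples `(k, k̄, k₀)` counted by the Pieri numbers `b^λ_{γ,r}`, for all `r`, where
`γ + ρ = addHalf y` and `λ + ρ = addHalf z`. -/
def pieriTuples (y z : Fin (m + 1) → ℕ) : Set ((Fin (m + 1) → ℕ) × (Fin (m + 1) → ℕ) × Bool) :=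
  {t | (∀ i, t.2.1 i + y i = t.1 i + z i) ∧ t.2.1 0 + t.2.2.toNat ≤ z 0 ∧
    ∀ i : Fin m, max (y i.castSucc) (z i.castSucc) + 1 + t.2.1 i.succ ≤ z i.succ}

/-- The sums `k_i + k̄_i` of a tuple `(k, k̄, k₀)`, with `k₀` added to the first of them. -/
def pieriLength (t : (Fin (m + 1) → ℕ) × (Fin (m + 1) → ℕ) × Bool) : Fin (m + 1) → ℕ :=
  Fin.cases (t.1 0 + t.2.1 0 + t.2.2.toNat) fun i => t.1 i.succ + t.2.1 i.succ

/-- The possible values of `pieriLength` at each coordinate on `pieriTuples y z`. -/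
def pieriLengths (y z : Fin (m + 1) → ℕ) : Fin (m + 1) → Finset ℕ :=
  Fin.cases (arithRange (max (y 0) (z 0) - min (y 0) (z 0)) 1 (2 * min (y 0) (z 0) + 1)) fun i =>
    arithRange (max (y i.succ) (z i.succ) - min (y i.succ) (z i.succ)) 2
      (min (y i.succ) (z i.succ) - max (y i.castSucc) (z i.castSucc))

lemma sum_pieriLength (t : (Fin (m + 1) → ℕ) × (Fin (m + 1) → ℕ) × Bool) :
    ∑ i, pieriLength t i = t.2.2.toNat + ∑ i, (t.1 i + t.2.1 i) := by
  simp only [pieriLength, Fin.sum_univ_succ, Fin.cases_zero, Fin.cases_succ]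
  ring

lemma forall_fin_succ_iff {P : Fin (m + 1) → Fin (m + 1) → Prop} :
    (∀ i : Fin (m + 1), ∀ h : (i : ℕ) + 1 < m + 1, P i ⟨i + 1, h⟩) ↔
      ∀ i : Fin m, P i.castSucc i.succ :=
  ⟨fun h i => h i.castSucc (Nat.succ_lt_succ i.2), fun h i hi => h ⟨i, Nat.lt_of_succ_lt_succ hi⟩⟩

lemma sub_eq_ofShifted_sub_iff (y z : Fin m → ℕ) (i : Fin m) (k k' : ℕ) :
    (k' : ℚ) - k = ofShifted z i - ofShifted y i ↔ k' + y i = k + z i := by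
  rw [ofShifted, ofShifted, ← @Nat.cast_inj ℚ]
  push_cast
  constructor <;> intro h <;> linarith

lemma ofShifted_castSucc_le_iff (x z : Fin (m + 1) → ℕ) (i : Fin m) (k : ℕ) :
    ofShifted x i.castSucc ≤ ofShifted z i.succ - k ↔ x i.castSucc + 1 + k ≤ z i.succ := by
  rw [ofShifted, ofShifted, ← @Nat.cast_le ℚ, Fin.val_succ, Fin.val_castSucc]
  push_cast
  constructor <;> intro h <;> linarith

lemma bPieri_ofShifted (y z : Fin (m + 1) → ℕ) (r : ℕ) :
    bPieri (ofShifted y) (ofShifted z) r =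
      Nat.card {t // ∑ i, pieriLength t i = r ∧ t ∈ pieriTuples y z} := by
  refine Nat.card_congr (Equiv.subtypeEquivRight fun ⟨k, k', b⟩ => ?_)
  have hzero : (if b then 0 < ofShifted z 0 - k' 0 else 0 ≤ ofShifted z 0 - k' 0) ↔
      k' 0 + b.toNat ≤ z 0 := by
    cases b <;> simp [ofShifted]
  have hy (h : ∀ i, k' i + y i = k i + z i) (i : Fin (m + 1)) :
      ofShifted z i + k i - k' i = ofShifted y i := by
    linarith [(sub_eq_ofShifted_sub_iff y z i _ _).2 (h i)]
  simp only [sum_pieriLength, sub_eq_ofShifted_sub_iff]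
  refine and_congr Iff.rfl (and_congr_right fun h => ?_)
  simp only [hy h]
  rw [forall_fin_succ_iff (P := fun i j => ofShifted z i ≤ ofShifted z j - k' j),
    forall_fin_succ_iff (P := fun i j => ofShifted y i ≤ ofShifted z j - k' j), ← hzero]
  simp only [ofShifted_castSucc_le_iff]
  constructor
  · rintro ⟨hz, hy, h0⟩
    refine ⟨h0 m.succ_pos, fun i => ?_⟩
    have := hz i
    have := hy i
    omega
  · rintro ⟨h0, hyz⟩
    refine ⟨fun i => ?_, fun i => ?_, fun _ => h0⟩ <;> have := hyz i <;> omega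

lemma add_mem_arithRange_two_iff {p y z k k' : ℕ} (h : k' + y = k + z) :
    k + k' ∈ arithRange (max y z - min y z) 2 (min y z - p) ↔ p + 1 + k' ≤ z := by
  rw [mem_arithRange]
  exact ⟨fun ⟨a, ha, hk⟩ => by omega, fun hp => ⟨min k k', by omega, by omega⟩⟩

lemma add_mem_arithRange_one_iff {y z k k' : ℕ} {b : Bool} (h : k' + y = k + z) :
    k + k' + b.toNat ∈ arithRange (max y z - min y z) 1 (2 * min y z + 1) ↔
      k' + b.toNat ≤ z := by
  rw [mem_arithRange]
  have hb := b.toNat_le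
  exact ⟨fun ⟨a, ha, hk⟩ => by omega,
    fun hp => ⟨2 * min k k' + b.toNat, by omega, by omega⟩⟩

lemma exists_add_eq_of_mem_arithRange_two {y z n l : ℕ}
    (h : l ∈ arithRange (max y z - min y z) 2 n) :
    ∃ k k', k' + y = k + z ∧ k + k' = l := by
  obtain ⟨a, -, rfl⟩ := mem_arithRange.1 h
  exact ⟨a + (y - z), a + (z - y), by omega, by omega⟩

lemma exists_add_toNat_eq_of_mem_arithRange_one {y z n l : ℕ}
    (h : l ∈ arithRange (max y z - min y z) 1 n) :
    ∃ (k k' : ℕ) (b : Bool), k' + y = k + z ∧ k + k' + b.toNat = l := by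
  obtain ⟨a, -, rfl⟩ := mem_arithRange.1 h
  obtain ⟨a, rfl | rfl⟩ := a.even_or_odd'
  · exact ⟨a + (y - z), a + (z - y), false, by omega, by rw [Bool.toNat_false]; omega⟩
  · exact ⟨a + (y - z), a + (z - y), true, by omega, by rw [Bool.toNat_true]; omega⟩

lemma pieriLength_mem_iff {y z : Fin (m + 1) → ℕ}
    {t : (Fin (m + 1) → ℕ) × (Fin (m + 1) → ℕ) × Bool} (h : ∀ i, t.2.1 i + y i = t.1 i + z i) :
    (∀ i, pieriLength t i ∈ pieriLengths y z i) ↔ t ∈ pieriTuples y z := by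
  simp only [pieriTuples, Fin.forall_fin_succ, pieriLength, pieriLengths, Fin.cases_zero,
    Fin.cases_succ, add_mem_arithRange_one_iff (h 0), add_mem_arithRange_two_iff (h (Fin.succ _)),
    Set.mem_ofPred_eq, h 0, h (Fin.succ _), implies_true, true_and]

lemma bijOn_pieriLength (y z : Fin (m + 1) → ℕ) :
    Set.BijOn pieriLength (pieriTuples y z) {l | ∀ i, l i ∈ pieriLengths y z i} := by
  refine ⟨fun t ht => (pieriLength_mem_iff ht.1).2 ht, ?_, ?_⟩
  · rintro ⟨k, k', b⟩ ⟨h, -⟩ ⟨j, j', c⟩ ⟨h', -⟩ heq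
    replace h : ∀ i, k' i + y i = k i + z i := h
    replace h' : ∀ i, j' i + y i = j i + z i := h'
    have hzero : k 0 + k' 0 + b.toNat = j 0 + j' 0 + c.toNat := congrFun heq 0
    have hsucc (i : Fin m) : k i.succ + k' i.succ = j i.succ + j' i.succ := congrFun heq i.succ
    -- `k 0` and `k' 0` have prescribed difference, so the parity of the length determines `b`.
    have hbc : b = c := by
      have := h 0
      have := h' 0
      cases b <;> cases c <;> simp only [Bool.toNat_true, Bool.toNat_false] at hzero ⊢ <;> omega
    subst hbc
    have hk : k = j := funext <| Fin.forall_fin_succ.2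
      ⟨by grind, fun i => by grind⟩
    have hk' : k' = j' := funext fun i => by grind
    rw [hk, hk']
  · intro l hl
    obtain ⟨k₀, k₀', b, hk₀, hl₀⟩ := exists_add_toNat_eq_of_mem_arithRange_one (hl 0)
    choose k k' hk hkl using fun i : Fin m => exists_add_eq_of_mem_arithRange_two (hl i.succ)
    have h : ∀ i, (Fin.cons k₀' k' : Fin (m + 1) → ℕ) i + y i =
        (Fin.cons k₀ k : Fin (m + 1) → ℕ) i + z i := Fin.forall_fin_succ.2 ⟨hk₀, hk⟩
    have hlen : pieriLength (Fin.cons k₀ k, Fin.cons k₀' k', b) = l :=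
      funext <| Fin.forall_fin_succ.2 ⟨hl₀, hkl⟩
    exact ⟨_, (pieriLength_mem_iff h).1 (hlen ▸ hl), hlen⟩

theorem coeff_prod_indicatorSeries_pieriLengths (y z : Fin (m + 1) → ℕ) (r : ℕ) :
    PowerSeries.coeff r (∏ i, indicatorSeries (pieriLengths y z i)) =
      bPieri (ofShifted y) (ofShifted z) r := by
  rw [coeff_prod_indicatorSeries, bPieri_ofShifted, Nat.cast_inj]
  exact (Nat.card_congr ((Set.mapsTo_preimage pieriLength {l | ∑ i, l i = r}).inter_bijOn
    (bijOn_pieriLength y z) Set.inter_subset_right).equiv).symm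

theorem prod_indicatorSeries_pieriLengths_mul {y z : Fin (m + 1) → ℕ} (hy : StrictMono y)
    (hz : StrictMono z) :
    (∏ i, indicatorSeries (pieriLengths y z i)) *
        ((1 - PowerSeries.X) * (1 - PowerSeries.X ^ 2) ^ m) =
      (Matrix.of fun i j => reflectionKernel PowerSeries.X (y i) (z j)).det := by
  have hpow : (1 - PowerSeries.X : PowerSeries ℤ) * (1 - PowerSeries.X ^ 2) ^ m =
      ∏ i : Fin (m + 1), Fin.cases (1 - PowerSeries.X) (fun _ => 1 - PowerSeries.X ^ 2) i := by
    rw [Fin.prod_univ_succ]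
    simp
  rw [det_reflectionKernel _ hy hz, hpow, ← prod_mul_distrib]
  refine prod_congr rfl fun i _ => ?_
  cases i using Fin.cases with
  | zero =>
    have hser := indicatorSeries_arithRange_mul (max (y 0) (z 0) - min (y 0) (z 0))
      (2 * min (y 0) (z 0) + 1) one_ne_zero
    rw [pow_one] at hser
    exact hser
  | succ i =>
    refine (indicatorSeries_arithRange_mul _ _ two_ne_zero).trans ?_
    rw [← pow_mul, gapExponent, Fin.cases_succ]

end PieriNumbers

section PieriRule

variable {m : ℕ} {M : Type*} [AddCommGroup M]

lemma coeff_mul_indicatorSeries_even (f : PowerSeries ℤ) (R : ℕ) :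
    PowerSeries.coeff R (f * indicatorSeries {k | Even k}) =
      ∑ p ∈ range (R + 1) ×ˢ range (R + 1) with p.1 + 2 * p.2 = R, PowerSeries.coeff p.1 f := by
  simp only [PowerSeries.coeff_mul, indicatorSeries, PowerSeries.coeff_mk, Set.indicator_apply,
    Set.mem_ofPred_eq, Pi.one_apply, mul_ite, mul_one, mul_zero]
  rw [← sum_filter]
  refine sum_nbij' (fun p => (p.1, p.2 / 2)) (fun p => (p.1, 2 * p.2)) ?_ ?_ ?_ ?_ ?_ <;>
    simp only [mem_filter, HasAntidiagonal.mem_antidiagonal, mem_product, mem_range] <;> grind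

lemma one_sub_X_mul_one_sub_X_sq_pow_ne_zero :
    (1 - PowerSeries.X : PowerSeries ℤ) * (1 - PowerSeries.X ^ 2) ^ m ≠ 0 := fun h => by
  simpa using congrArg PowerSeries.constantCoeff h

theorem weylAltSum_coeff_partitionSeries_vecWeight {y z : Fin (m + 1) → ℕ} (hy : StrictMono y)
    (hz : StrictMono z) (R : ℕ) :
    weylAltSum (fun β => PowerSeries.coeff R (partitionSeries vecWeight (β - addHalf y)))
        (addHalf z) =
      ∑ p ∈ range (R + 1) ×ˢ range (R + 1) with p.1 + 2 * p.2 = R,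
        (bPieri (ofShifted y) (ofShifted z) p.1 : ℤ) := by
  have hV : (1 - PowerSeries.X ^ 2) * indicatorSeries {k | Even k} = 1 := by
    simpa [mul_comm] using indicatorSeries_even_sub_mul 0
  have hquot : weylAltSum (fun β => partitionSeries vecWeight (β - addHalf y)) (addHalf z) *
      (1 - PowerSeries.X ^ 2) = ∏ i, indicatorSeries (pieriLengths y z i) := by
    refine mul_right_cancel₀ (one_sub_X_mul_one_sub_X_sq_pow_ne_zero (m := m)) ?_
    rw [prod_indicatorSeries_pieriLengths_mul hy hz, ← weylAltSum_partitionSeries_vecWeight_mul,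
      pow_succ']
    ring
  calc
    _ = PowerSeries.coeff R
          (weylAltSum (fun β => partitionSeries vecWeight (β - addHalf y)) (addHalf z)) :=
      (map_weylAltSum (PowerSeries.coeff R).toAddMonoidHom
        (fun β => partitionSeries vecWeight (β - addHalf y)) (addHalf z)).symm
    _ = PowerSeries.coeff R ((∏ i, indicatorSeries (pieriLengths y z i)) *
          indicatorSeries {k | Even k}) := by
      rw [← hquot, mul_assoc, hV, mul_one]
    _ = _ := by
      simp only [coeff_mul_indicatorSeries_even, coeff_prod_indicatorSeries_pieriLengths]

lemma ofShifted_injective : Function.Injective (ofShifted : (Fin m → ℕ) → Fin m → ℚ) := by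
  intro z z' h
  funext i
  simpa [ofShifted] using congrFun h i

lemma monotone_ofShifted {z : Fin (m + 1) → ℕ} : Monotone (ofShifted z) ↔ StrictMono z := by
  rw [Fin.monotone_iff_le_succ, Fin.strictMono_iff_lt_succ]
  refine forall_congr' fun i => ?_
  have := ofShifted_castSucc_le_iff z z i 0
  simpa [Nat.succ_le_iff] using this

lemma setOf_dominantB_eq_image :
    {lam : Fin (m + 1) → ℚ | DominantB lam ∧ ∀ i, ∃ z : ℤ, lam i = z} =
      ofShifted '' {z | StrictMono z} := by
  ext lam
  constructor
  · rintro ⟨⟨hmono, hnonneg, -⟩, hint⟩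
    choose w hw using hint
    have hw0 (i : Fin (m + 1)) : 0 ≤ w i := by exact_mod_cast hw i ▸ hnonneg i
    lift w to Fin (m + 1) → ℕ using hw0
    have hlam : ofShifted (fun i => w i + i) = lam := by
      funext i
      simp [ofShifted, hw]
    exact ⟨_, monotone_ofShifted.1 (hlam ▸ hmono), hlam⟩
  · rintro ⟨z, hz, rfl⟩
    have hmono := monotone_ofShifted.2 hz
    have hint (i : Fin (m + 1)) : ∃ n : ℤ, ofShifted z i = n :=
      ⟨z i - (i : ℕ), by simp [ofShifted]⟩
    have hzero : 0 ≤ ofShifted z 0 := by simp [ofShifted]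
    exact ⟨⟨hmono, fun i => hzero.trans (hmono (Fin.zero_le i)), Or.inl hint⟩, hint⟩

lemma le_add_of_bPieri_ne_zero {y z : Fin (m + 1) → ℕ} {r : ℕ}
    (h : bPieri (ofShifted y) (ofShifted z) r ≠ 0) (i : Fin (m + 1)) : z i ≤ y i + r := by
  rw [bPieri_ofShifted] at h
  obtain ⟨⟨t, hsum, ht⟩⟩ := (Nat.card_ne_zero.1 h).1
  rw [sum_pieriLength] at hsum
  have hle := single_le_sum (f := fun i => t.1 i + t.2.1 i) (fun _ _ => Nat.zero_le _)
    (mem_univ i)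
  have hi := ht.1 i
  omega

lemma finsum_bPieri_smul {y : Fin (m + 1) → ℕ} {r L : ℕ} (hL : ∀ i, y i + r < L)
    (F : (Fin (m + 1) → ℚ) → M) :
    ∑ᶠ lam ∈ {lam : Fin (m + 1) → ℚ | DominantB lam ∧ ∀ i, ∃ z : ℤ, lam i = z},
        (bPieri (ofShifted y) lam r : ℤ) • F lam =
      ∑ z ∈ strictChamber (m + 1) L,
        (bPieri (ofShifted y) (ofShifted z) r : ℤ) • F (ofShifted z) := by
  rw [setOf_dominantB_eq_image, finsum_mem_image ofShifted_injective.injOn]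
  refine finsum_mem_eq_sum_of_inter_support_eq _ (Set.ext fun z => ?_)
  refine and_congr_left fun hz => ?_
  have hb : bPieri (ofShifted y) (ofShifted z) r ≠ 0 := fun hb => hz (by simp [hb])
  have hlt (i : Fin (m + 1)) : z i < L := (le_add_of_bPieri_ne_zero hb i).trans_lt (hL i)
  simp [mem_strictChamber, hlt]

theorem sum_weylAltSum_add_vecWeight_eq_sum_bPieri [IsAddTorsionFree M]
    (G : (Fin (m + 1) → ℚ) → M) {y : Fin (m + 1) → ℕ} (hy : StrictMono y) (R : ℕ) :
    ∑ c ∈ piAntidiag univ R,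
        weylAltSum G (addHalf y + ∑ v : VecIdx (m + 1), (c v : ℚ) • vecWeight v) =
      ∑ p ∈ range (R + 1) ×ˢ range (R + 1),
        if p.1 + 2 * p.2 = R then
          ∑ᶠ lam ∈ {lam : Fin (m + 1) → ℚ | DominantB lam ∧ ∀ i, ∃ z : ℤ, lam i = z},
            (bPieri (ofShifted y) lam p.1 : ℤ) • weylAltSum G (lam + rhoB (m + 1))
        else 0 := by
  have hL (r : ℕ) (hr : r ≤ R) (i : Fin (m + 1)) : y i + r < y (Fin.last m) + R + 1 := by
    have := hy.monotone (Fin.le_last i)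
    omega
  rw [sum_weylAltSum_add_vecWeight G (hL R le_rfl), ← sum_filter]
  calc
    _ = ∑ z ∈ strictChamber (m + 1) (y (Fin.last m) + R + 1),
          ∑ p ∈ range (R + 1) ×ˢ range (R + 1) with p.1 + 2 * p.2 = R,
            (bPieri (ofShifted y) (ofShifted z) p.1 : ℤ) • weylAltSum G (addHalf z) :=
      sum_congr rfl fun z hz => by
        rw [weylAltSum_coeff_partitionSeries_vecWeight hy (mem_strictChamber.1 hz).2, sum_smul]
    _ = _ := by
      rw [sum_comm]
      refine sum_congr rfl fun p hp => ?_
      have hp : p.1 ≤ R := by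
        have := (mem_filter.1 hp).2
        omega
      simp only [finsum_bPieri_smul (hL _ hp), ofShifted_add_rhoB]

end PieriRule

section Recurrence

variable {m : ℕ}

lemma KB_eq_weylAltSum (lam mu : Fin m → ℚ) :
    KB m lam mu =
      weylAltSum (fun β => kostantQ (rootsB m) (β - (mu + rhoB m))) (lam + rhoB m) := rfl

lemma snoc_sub_add_rhoB (β : Fin m → ℚ) (x : ℚ) (μ : Fin (m + 1) → ℚ) :
    Fin.snoc (α := fun _ => ℚ) β x - (μ + rhoB (m + 1)) =
      Fin.snoc (α := fun _ => ℚ) (β - ((fun i => μ i.castSucc) + rhoB m))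
        (x - (μ (Fin.last m) + rhoB (m + 1) (Fin.last m))) := by
  funext i
  cases i using Fin.lastCases with
  | last => simp
  | cast i =>
    simp only [Pi.sub_apply, Fin.snoc_castSucc]
    rfl

lemma kostantQ_snoc_sub_eq_zero (β : Fin m → ℚ) {x : ℚ} {μ : Fin (m + 1) → ℚ}
    (hx : ∀ R : ℕ, x - (μ (Fin.last m) + rhoB (m + 1) (Fin.last m)) ≠ R) :
    kostantQ (rootsB (m + 1)) (Fin.snoc (α := fun _ => ℚ) β x - (μ + rhoB (m + 1))) = 0 := by
  rw [snoc_sub_add_rhoB, kostantQ_rootsB_succ_eq_zero _ hx]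

lemma weylAltSum_kostantQ_snoc_sub_eq_zero (β : Fin m → ℚ) {x : ℚ} {μ : Fin (m + 1) → ℚ}
    (hx : ∀ R : ℕ, x - (μ (Fin.last m) + rhoB (m + 1) (Fin.last m)) ≠ R) :
    weylAltSum
      (fun γ => kostantQ (rootsB (m + 1))
        (Fin.snoc (α := fun _ => ℚ) γ x - (μ + rhoB (m + 1)))) β = 0 := by
  simp only [weylAltSum, kostantQ_snoc_sub_eq_zero _ hx, smul_zero, sum_const_zero]

theorem weylAltSum_kostantQ_snoc_sub {y : Fin (m + 1) → ℕ} (hy : StrictMono y)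
    {μ : Fin (m + 2) → ℚ} {x : ℚ} {R : ℕ}
    (hx : x - (μ (Fin.last (m + 1)) + rhoB (m + 2) (Fin.last (m + 1))) = R) :
    weylAltSum
        (fun β => kostantQ (rootsB (m + 2))
          (Fin.snoc (α := fun _ => ℚ) β x - (μ + rhoB (m + 2)))) (addHalf y) =
      PowerSeries.X ^ R * ∑ p ∈ range (R + 1) ×ˢ range (R + 1),
        if p.1 + 2 * p.2 = R then
          ∑ᶠ lam ∈ {lam : Fin (m + 1) → ℚ | DominantB lam ∧ ∀ i, ∃ z : ℤ, lam i = z},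
            (bPieri (ofShifted y) lam p.1 : ℤ) • KB (m + 1) lam (fun i => μ i.castSucc)
        else 0 := by
  have : IsAddTorsionFree (PowerSeries ℤ) :=
    inferInstanceAs (IsAddTorsionFree ((Unit →₀ ℕ) → ℤ))
  let G : (Fin (m + 1) → ℚ) → PowerSeries ℤ := fun β =>
    kostantQ (rootsB (m + 1)) (β - ((fun i => μ i.castSucc) + rhoB (m + 1)))
  have hsplit (β : Fin (m + 1) → ℚ) :
      kostantQ (rootsB (m + 2)) (Fin.snoc (α := fun _ => ℚ) β x - (μ + rhoB (m + 2))) =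
        PowerSeries.X ^ R * ∑ c ∈ piAntidiag univ R,
          G (β - ∑ v : VecIdx (m + 1), (c v : ℚ) • vecWeight v) := by
    rw [snoc_sub_add_rhoB, hx, kostantQ_rootsB_succ_natCast]
    simp only [G, sub_right_comm]
  simp only [hsplit]
  refine (map_weylAltSum (AddMonoidHom.mulLeft (PowerSeries.X ^ R))
    (fun β => ∑ c ∈ piAntidiag univ R,
      G (β - ∑ v : VecIdx (m + 1), (c v : ℚ) • vecWeight v)) (addHalf y)).symm.trans ?_
  rw [weylAltSum_sum_sub, sum_weylAltSum_add_vecWeight_eq_sum_bPieri G hy]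
  rfl

/-- The exponent `R_k = ν_k + k - μ_n - n` of the recurrence in rank `n = m + 2`; the `0`-based
index `j` stands for `k = j + 1`. -/
def morrisExponent (ν μ : Fin (m + 2) → ℤ) (j : Fin (m + 2)) : ℤ :=
  ν j + ((j : ℕ) : ℤ) + 1 - μ (Fin.last (m + 1)) - ((m + 2 : ℕ) : ℤ)

/-- The weight `γ_k` of the recurrence, where `k = j + 1`. -/
def morrisWeight (ν : Fin (m + 1) → ℤ) (j : Fin (m + 1)) : Fin m → ℚ := fun i =>
  if (i : ℕ) < (j : ℕ) then (ν i.castSucc : ℚ) else (ν i.succ : ℚ) + 1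

/-- The shifted weight `γ_k + ρ` of the recurrence, as a strictly increasing sequence. -/
def morrisShifted (ν : Fin (m + 1) → ℤ) (j : Fin (m + 1)) : Fin m → ℕ := fun i =>
  (ν (j.succAbove i)).toNat + (j.succAbove i : ℕ)

lemma strictMono_morrisShifted {ν : Fin (m + 1) → ℤ} (hν : Monotone ν) (j : Fin (m + 1)) :
    StrictMono (morrisShifted ν j) := fun _ _ h =>
  have hj := Fin.strictMono_succAbove j h
  add_lt_add_of_le_of_lt (Int.toNat_le_toNat (hν hj.le)) hj

lemma addHalf_morrisShifted {ν : Fin (m + 1) → ℤ} (hν0 : ∀ i, 0 ≤ ν i) (j : Fin (m + 1)) :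
    addHalf (morrisShifted ν j) = ((fun i => (ν i : ℚ)) + rhoB (m + 1)) ∘ j.succAbove := by
  lift ν to Fin (m + 1) → ℕ using hν0
  funext i
  simp [addHalf, morrisShifted, rhoB, add_assoc]

lemma ofShifted_morrisShifted {ν : Fin (m + 1) → ℤ} (hν0 : ∀ i, 0 ≤ ν i) (j : Fin (m + 1)) :
    ofShifted (morrisShifted ν j) = morrisWeight ν j := by
  lift ν to Fin (m + 1) → ℕ using hν0
  funext i
  simp only [ofShifted, morrisShifted, morrisWeight]
  split_ifs with h
  · rw [Fin.succAbove_of_castSucc_lt _ _ h]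
    simp
  · rw [Fin.succAbove_of_le_castSucc _ _ (not_lt.1 h)]
    simp only [Fin.val_succ, Int.toNat_natCast]
    push_cast
    ring

lemma one_mul_sub_eq_morrisExponent (ν μ : Fin (m + 2) → ℤ) (j : Fin (m + 2)) :
    1 * ((fun i => (ν i : ℚ)) + rhoB (m + 2)) j -
        (μ (Fin.last (m + 1)) + rhoB (m + 2) (Fin.last (m + 1))) =
      morrisExponent ν μ j := by
  simp only [morrisExponent, rhoB, Pi.add_apply, Fin.val_last]
  push_cast
  ring

lemma neg_one_mul_sub_ne_natCast {ν μ : Fin (m + 2) → ℤ} (hν0 : ∀ i, 0 ≤ ν i)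
    (hμ : -((m + 2 : ℕ) : ℤ) < μ (Fin.last (m + 1))) (j : Fin (m + 2)) (R : ℕ) :
    -1 * ((fun i => (ν i : ℚ)) + rhoB (m + 2)) j -
        (μ (Fin.last (m + 1)) + rhoB (m + 2) (Fin.last (m + 1))) ≠ R := by
  have h : (0 : ℚ) < ((ν j + j + μ (Fin.last (m + 1)) + m + 2 : ℤ) : ℚ) := by
    have := hν0 j
    push_cast at hμ
    exact_mod_cast (by omega : 0 < ν j + j + μ (Fin.last (m + 1)) + m + 2)
  simp only [rhoB, Pi.add_apply, Fin.val_last]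
  push_cast at h ⊢
  intro heq
  linarith [(R.cast_nonneg : (0 : ℚ) ≤ R)]

theorem morris_B_general (ν μ : Fin (m + 2) → ℤ) (hν : Monotone ν) (hν0 : ∀ i, 0 ≤ ν i)
    (hμ : -((m + 2 : ℕ) : ℤ) < μ (Fin.last (m + 1))) :
    KB (m + 2) (fun i => (ν i : ℚ)) (fun i => (μ i : ℚ)) =
      ∑ j : Fin (m + 2),
        if 0 ≤ morrisExponent ν μ j then
          ((-1 : ℤ) ^ (m + 1 - (j : ℕ))) •
            (PowerSeries.X ^ (morrisExponent ν μ j).toNat *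
              ∑ p ∈ range ((morrisExponent ν μ j).toNat + 1) ×ˢ
                    range ((morrisExponent ν μ j).toNat + 1),
                if p.1 + 2 * p.2 = (morrisExponent ν μ j).toNat then
                  ∑ᶠ lam ∈ {lam : Fin (m + 1) → ℚ | DominantB lam ∧ ∀ i, ∃ z : ℤ, lam i = z},
                    (bPieri (morrisWeight ν j) lam p.1 : ℤ) •
                      KB (m + 1) lam (fun i => (μ i.castSucc : ℚ))
                else 0)
        else 0 := by
  rw [KB_eq_weylAltSum, weylAltSum_succ]
  refine sum_congr rfl fun j _ => ?_
  have hneg := weylAltSum_kostantQ_snoc_sub_eq_zero (μ := fun i => (μ i : ℚ))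
    (addHalf (morrisShifted ν j)) (neg_one_mul_sub_ne_natCast hν0 hμ j)
  have hexp := one_mul_sub_eq_morrisExponent ν μ j
  rw [Fintype.sum_bool]
  simp only [if_true, Bool.false_eq_true, if_false, mul_one, ← addHalf_morrisShifted hν0]
  rw [hneg, smul_zero, zero_add]
  split_ifs with hR
  · obtain ⟨R, hR⟩ := Int.eq_ofNat_of_zero_le hR
    rw [hR, Int.cast_natCast] at hexp
    rw [weylAltSum_kostantQ_snoc_sub (μ := fun i => (μ i : ℚ)) (strictMono_morrisShifted hν j) hexp,
      hR, Int.toNat_natCast, ofShifted_morrisShifted hν0]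
  · rw [weylAltSum_kostantQ_snoc_sub_eq_zero (μ := fun i => (μ i : ℚ)), smul_zero]
    intro R h
    rw [hexp] at h
    exact hR ((by exact_mod_cast h : morrisExponent ν μ j = R) ▸ Int.natCast_nonneg R)

end Recurrence

end MorrisRecurrence

/-- Morris-type recurrence for type `B_n`:
`K^{B_n}_{ν,μ}(q) = ∑_{k, R_k ≥ 0} (-1)^{n-k} q^{R_k} ∑_{r+2m=R_k} ∑_λ b^λ_{γ_k,r} K^{B_{n-1}}_{λ,μ'}(q)`. -/
theorem morris_B (n : ℕ) (hn : 2 ≤ n) (ν μ : Fin n → ℤ)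
    (hν : Monotone ν) (hν0 : ∀ i, 0 ≤ ν i)
    (hμ : Monotone μ) (hμ0 : ∀ i, 0 ≤ μ i) :
    KB n (fun i => (ν i : ℚ)) (fun i => (μ i : ℚ)) =
      ∑ j : Fin n,
        if 0 ≤ ν j + ((j : ℕ) : ℤ) + 1 - μ ⟨n - 1, by omega⟩ - (n : ℤ) then
          ((-1 : ℤ) ^ (n - 1 - (j : ℕ))) •
            ((PowerSeries.X : PowerSeries ℤ) ^
                (ν j + ((j : ℕ) : ℤ) + 1 - μ ⟨n - 1, by omega⟩ - (n : ℤ)).toNat *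
              ∑ p ∈ Finset.range ((ν j + ((j : ℕ) : ℤ) + 1 - μ ⟨n - 1, by omega⟩ - (n : ℤ)).toNat + 1) ×ˢ
                    Finset.range ((ν j + ((j : ℕ) : ℤ) + 1 - μ ⟨n - 1, by omega⟩ - (n : ℤ)).toNat + 1),
                if p.1 + 2 * p.2 = (ν j + ((j : ℕ) : ℤ) + 1 - μ ⟨n - 1, by omega⟩ - (n : ℤ)).toNat then
                  ∑ᶠ lam ∈ {lam : Fin (n - 1) → ℚ | DominantB lam ∧ ∀ i, ∃ z : ℤ, lam i = z},
                    (bPieri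
                        (fun i : Fin (n - 1) =>
                          if (i : ℕ) < (j : ℕ) then (ν ⟨(i : ℕ), by have := i.2; omega⟩ : ℚ)
                          else (ν ⟨(i : ℕ) + 1, by have := i.2; omega⟩ : ℚ) + 1)
                        lam p.1 : ℤ) •
                      KB (n - 1) lam (restrict1 fun i => (μ i : ℚ))
                else 0)
        else 0 := by
  obtain ⟨m, rfl⟩ : ∃ m, n = m + 2 := ⟨n - 2, by omega⟩
  exact morris_B_general ν μ hν hν0 (by have := hμ0 (Fin.last (m + 1)); omega)
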